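/- arXiv:1909.11027 — 4 statements merged into one kernel-verified Lean document; each statement's English description precedes it below -/
import Mathlib

section
/- A sequence (Π_i)_{i∈ℕ} of permutations is quasirandom if and only if lim_{i→∞} d(π, Π_i) = 1/4! = 1/24 for every 4-permutation π. -/
open MeasureTheory Filter

noncomputable section

/-- A permuton: a Borel probability measure on `ℝ × ℝ` (supported on `[0,1]²`)
with uniform marginals. -/
def IsPermuton (μ : Measure (ℝ × ℝ)) : Prop :=
  IsProbabilityMeasure μ ∧
    (∀ x x' : ℝ, 0 ≤ x → x ≤ x' → x' ≤ 1 →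
      μ (Set.Icc x x' ×ˢ Set.Icc (0 : ℝ) 1) = ENNReal.ofReal (x' - x)) ∧
    (∀ y y' : ℝ, 0 ≤ y → y ≤ y' → y' ≤ 1 →
      μ (Set.Icc (0 : ℝ) 1 ×ˢ Set.Icc y y') = ENNReal.ofReal (y' - y))

/-- The uniform permuton: two-dimensional Lebesgue measure on `[0,1]²`. -/
def uniformPermuton : Measure (ℝ × ℝ) :=
  volume.restrict (Set.Icc (0 : ℝ) 1 ×ˢ Set.Icc (0 : ℝ) 1)

/-- The support of a Borel measure: all points each of whose open neighbourhoods has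
positive measure. -/
def measSupport (μ : Measure (ℝ × ℝ)) : Set (ℝ × ℝ) :=
  {p | ∀ U : Set (ℝ × ℝ), IsOpen U → p ∈ U → 0 < μ U}

/-- The pattern density of a `k`-permutation `π` in a measure `μ` on `ℝ × ℝ`:
the `μ^{⊗ k}`-probability that `k` sampled points, relabelled so that their
`x`-coordinates increase, have `y`-coordinates ordered according to `π`. -/
def PermutonDensity {k : ℕ} (π : Equiv.Perm (Fin k)) (μ : Measure (ℝ × ℝ)) : ℝ :=
  ((Measure.pi fun _ : Fin k => μ)
    {p : Fin k → ℝ × ℝ | ∃ σ : Equiv.Perm (Fin k),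
      StrictMono (fun i => (p (σ i)).1) ∧
        ∀ i j : Fin k, (p (σ i)).2 < (p (σ j)).2 ↔ π i < π j}).toReal

open scoped Classical in
/-- The pattern density of a `k`-permutation `π` in an `n`-permutation `Π`:
the proportion of `k`-element subsets of `Fin n` on which `Π` induces the pattern `π`
(zero when `n < k`). -/
def PatternDensity {k n : ℕ} (π : Equiv.Perm (Fin k)) (Perm : Equiv.Perm (Fin n)) : ℝ :=
  ((Finset.univ.filter fun A : Finset (Fin n) =>
      ∃ h : A.card = k, ∀ i j : Fin k,
        Perm ↑(A.orderIsoOfFin h i) < Perm ↑(A.orderIsoOfFin h j) ↔ π i < π j).card : ℝ) /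
    (n.choose k)

/-- A sequence of permutations (of varying orders) is quasirandom if the density of every
pattern `π` converges to `1/|π|!`. -/
def Quasirandom (P : ℕ → (n : ℕ) × Equiv.Perm (Fin n)) : Prop :=
  ∀ (k : ℕ) (π : Equiv.Perm (Fin k)),
    Tendsto (fun i => PatternDensity π (P i).2) atTop (nhds (1 / (Nat.factorial k : ℝ)))

/-- A set `S` of `k`-permutations is `Σ`-forcing if a sequence of permutations is quasirandom
exactly when the sum of the densities of the patterns from `S` converges to `|S|/k!`. -/
def SigmaForcing {k : ℕ} (S : Finset (Equiv.Perm (Fin k))) : Prop :=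
  ∀ P : ℕ → (n : ℕ) × Equiv.Perm (Fin n),
    Quasirandom P ↔
      Tendsto (fun i => ∑ π ∈ S, PatternDensity π (P i).2) atTop
        (nhds ((S.card : ℝ) / (Nat.factorial k : ℝ)))

/-- The `4`-permutation written in one-line notation as `(a+1)(b+1)(c+1)(d+1)`
(inputs are 0-indexed). -/
def mk4 (a b c d : Fin 4) (h : Function.Bijective ![a, b, c, d] := by decide) :
    Equiv.Perm (Fin 4) :=
  Equiv.ofBijective _ h

/-- A doubly stochastic matrix: non-negative entries, all row and column sums equal to one. -/
def IsDoublyStochastic {n : ℕ} (A : Matrix (Fin n) (Fin n) ℝ) : Prop :=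
  (∀ i j, 0 ≤ A i j) ∧ (∀ i, ∑ j, A i j = 1) ∧ (∀ j, ∑ i, A i j = 1)

/-- The step permuton `μ[A]` associated with an `n × n` doubly stochastic matrix `A`. -/
def stepPermuton {n : ℕ} (A : Matrix (Fin n) (Fin n) ℝ) : Measure (ℝ × ℝ) :=
  ∑ i : Fin n, ∑ j : Fin n,
    ENNReal.ofReal (A i j * n) •
      volume.restrict
        (Set.Ico ((i : ℝ) / n) (((i : ℝ) + 1) / n) ×ˢ
          Set.Ico ((j : ℝ) / n) (((j : ℝ) + 1) / n))

/-- The matrix `B^{ij}` (0-indexed: `p, q ∈ [n-1]`): `+1` at positions `(p,q)` and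
`(p+1,q+1)`, `-1` at positions `(p,q+1)` and `(p+1,q)`, `0` elsewhere. -/
def Bmat (n : ℕ) (p q : Fin (n - 1)) : Matrix (Fin n) (Fin n) ℝ := fun a b =>
  (if (a : ℕ) = (p : ℕ) ∧ (b : ℕ) = (q : ℕ) then 1 else 0) +
    (if (a : ℕ) = (p : ℕ) + 1 ∧ (b : ℕ) = (q : ℕ) + 1 then 1 else 0) -
    (if (a : ℕ) = (p : ℕ) ∧ (b : ℕ) = (q : ℕ) + 1 then 1 else 0) -
    (if (a : ℕ) = (p : ℕ) + 1 ∧ (b : ℕ) = (q : ℕ) then 1 else 0)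

/-- The matrix `A + ∑_{i,j} x_{ij} B^{ij}` where `A` is the `n × n` matrix with all
entries `1/n`. -/
def pertMatrix (n : ℕ) (x : Fin (n - 1) × Fin (n - 1) → ℝ) : Matrix (Fin n) (Fin n) ℝ :=
  fun a b => 1 / n + ∑ p : Fin (n - 1) × Fin (n - 1), x p * Bmat n p.1 p.2 a b

/-- The function `h_{S,n}`: the sum over `π ∈ S` of the pattern density of `π` in the
step permuton of the perturbed matrix. -/
def hSN (n : ℕ) (S : Finset (Equiv.Perm (Fin 4))) (x : Fin (n - 1) × Fin (n - 1) → ℝ) : ℝ :=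
  ∑ π ∈ S, PermutonDensity π (stepPermuton (pertMatrix n x))

open scoped Classical in
/-- The cover matrix of a set `S` of `4`-permutations: `C i j` is the number of `π ∈ S`
with `π j = i`. -/
def coverMatrix (S : Finset (Equiv.Perm (Fin 4))) : Fin 4 → Fin 4 → ℕ := fun i j =>
  (S.filter fun π => π j = i).card

/-- The eight symmetry operations on `4`-permutations. -/
def symOps : List (Equiv.Perm (Fin 4) → Equiv.Perm (Fin 4)) :=
  [fun σ => σ,
   fun σ => σ * Fin.revPerm,
   fun σ => Fin.revPerm * σ,
   fun σ => Fin.revPerm * σ * Fin.revPerm,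
   fun σ => σ⁻¹,
   fun σ => σ⁻¹ * Fin.revPerm,
   fun σ => Fin.revPerm * σ⁻¹,
   fun σ => Fin.revPerm * σ⁻¹ * Fin.revPerm]

open scoped Classical in
/-- `T` is symmetric to `S` if one of the eight symmetry operations maps `S` onto `T`. -/
def SymmetricSets (S T : Finset (Equiv.Perm (Fin 4))) : Prop :=
  ∃ op ∈ symOps, T = S.image op

end

/-- Number of occurrences, as order embeddings. -/
theorem QR.exists_pattern {k n : ℕ} (v : Fin k → Fin n) (hv : Function.Injective v) :
    ∃ (e : Fin k ↪o Fin n) (π : Equiv.Perm (Fin k)), ∀ i, v i = e (π i) := by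
  classical
  have hc : (Finset.univ.image v).card = k := by
    rw [Finset.card_image_of_injective _ hv]; simp
  let o := (Finset.univ.image v).orderIsoOfFin hc
  have hm : ∀ i, v i ∈ Finset.univ.image v := fun i => Finset.mem_image_of_mem _ (Finset.mem_univ i)
  let p : Fin k → Fin k := fun i => o.symm ⟨v i, hm i⟩
  have hp : Function.Injective p := by
    intro i j h
    have := o.symm.injective h
    exact hv (by simpa using this)
  refine ⟨(Finset.univ.image v).orderEmbOfFin hc,
    Equiv.ofBijective p (Finite.injective_iff_bijective.mp hp), fun i => ?_⟩
  rw [← Finset.coe_orderIsoOfFin_apply]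
  simp [p, o]

theorem QR.perm_ext {k : ℕ} (π π' : Equiv.Perm (Fin k)) (h : ∀ i j, π i < π j ↔ π' i < π' j) :
    π = π' := by
  have hm : StrictMono (fun i => π' (π.symm i)) := by
    intro i j hij
    have := (h (π.symm i) (π.symm j)).1 (by simpa using hij)
    exact this
  have h1 : (fun i => π' (π.symm i)) = id := by
    let e : Fin k ≃o Fin k := StrictMono.orderIsoOfSurjective _ hm (π'.surjective.comp π.symm.surjective)
    have : e = OrderIso.refl _ := Subsingleton.elim _ _
    funext i
    exact congrArg (fun z : Fin k ≃o Fin k => z i) this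
  ext i
  have := congrFun h1 (π i)
  simp at this
  rw [this]

open scoped Classical in
/-- The number of occurrences of a pattern. -/
noncomputable def QR.cnt {k n : ℕ} (π : Equiv.Perm (Fin k)) (Q : Equiv.Perm (Fin n)) : ℕ :=
  (Finset.univ.filter fun A : Finset (Fin n) =>
      ∃ h : A.card = k, ∀ i j : Fin k,
        Q ↑(A.orderIsoOfFin h i) < Q ↑(A.orderIsoOfFin h j) ↔ π i < π j).card

theorem QR.density_eq {k n : ℕ} (π : Equiv.Perm (Fin k)) (Q : Equiv.Perm (Fin n)) :
    PatternDensity π Q = (QR.cnt π Q : ℝ) / (n.choose k) := rfl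

open scoped Classical in
theorem QR.cnt_eq {k n : ℕ} (π : Equiv.Perm (Fin k)) (Q : Equiv.Perm (Fin n)) :
    QR.cnt π Q = (Finset.univ.filter fun e : Fin k ↪o Fin n =>
      ∀ i j, Q (e i) < Q (e j) ↔ π i < π j).card := by
  unfold QR.cnt
  symm
  refine Finset.card_bij (fun e _ => Finset.univ.map e.toEmbedding) ?_ ?_ ?_
  · intro e he
    simp only [Finset.mem_filter, Finset.mem_univ, true_and] at he ⊢
    have hc : (Finset.univ.map e.toEmbedding).card = k := by simp
    refine ⟨hc, fun i j => ?_⟩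
    have := Finset.orderEmbOfFin_unique hc (f := e) (by intro x; simp) e.strictMono
    rw [← he i j, this]
    rfl
  · intro e _ e' _ h
    have hc : (Finset.univ.map e.toEmbedding).card = k := by simp
    have h1 := Finset.orderEmbOfFin_unique hc (f := e) (by intro x; simp) e.strictMono
    have h2 := Finset.orderEmbOfFin_unique hc (f := e') (by
      intro x
      rw [h]; simp) e'.strictMono
    exact DFunLike.coe_injective (h1.trans h2.symm)
  · intro A hA
    simp only [Finset.mem_filter, Finset.mem_univ, true_and] at hA
    obtain ⟨hc, hA⟩ := hA
    refine ⟨A.orderEmbOfFin hc, ?_, ?_⟩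
    · simp only [Finset.mem_filter, Finset.mem_univ, true_and]
      exact hA
    · ext x
      have := Finset.range_orderEmbOfFin A hc
      have := Set.ext_iff.1 this x
      simpa using this

/-- Invariance of a function of a tuple under order isomorphism. -/
def QR.OInv {k : ℕ} (f : (Fin k → ℕ) → ℝ) : Prop :=
  ∀ u v : Fin k → ℕ, (∀ i j, u i < u j ↔ v i < v j) → f u = f v

open scoped Classical in
theorem QR.key {k n : ℕ} (f g : (Fin k → ℕ) → ℝ) (hf : QR.OInv f) (hg : QR.OInv g)
    (Q : Equiv.Perm (Fin n)) :
    ∑ a : Fin k → Fin n with Function.Injective a, f (fun i => a i) * g (fun i => Q (a i)) =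
    ∑ π : Equiv.Perm (Fin k), (QR.cnt π Q : ℝ) *
      ∑ τ : Equiv.Perm (Fin k), f (fun i => τ i) * g (fun i => π (τ i)) := by
  have h1 : ∀ π : Equiv.Perm (Fin k), (QR.cnt π Q : ℝ) *
      ∑ τ : Equiv.Perm (Fin k), f (fun i => τ i) * g (fun i => π (τ i)) =
      ∑ e : Fin k ↪o Fin n, if (∀ i j, Q (e i) < Q (e j) ↔ π i < π j) then
        ∑ τ : Equiv.Perm (Fin k), f (fun i => e (τ i)) * g (fun i => Q (e (τ i))) else 0 := by
    intro π
    rw [QR.cnt_eq, ← Finset.sum_filter, ← nsmul_eq_mul, ← Finset.sum_const]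
    refine Finset.sum_congr rfl fun e he => Finset.sum_congr rfl fun τ _ => ?_
    simp only [Finset.mem_filter, Finset.mem_univ, true_and] at he
    congr 1
    · apply hf; intro i j; simp
    · apply hg; intro i j; simp [he (τ i) (τ j)]
  simp_rw [h1]
  rw [Finset.sum_comm]
  have h2 : ∀ e : Fin k ↪o Fin n, (∑ π : Equiv.Perm (Fin k),
      if (∀ i j, Q (e i) < Q (e j) ↔ π i < π j) then
        ∑ τ : Equiv.Perm (Fin k), f (fun i => e (τ i)) * g (fun i => Q (e (τ i))) else 0) =
      ∑ τ : Equiv.Perm (Fin k), f (fun i => e (τ i)) * g (fun i => Q (e (τ i))) := by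
    intro e
    obtain ⟨e', π, h⟩ := QR.exists_pattern (fun i => Q (e i)) (Q.injective.comp e.injective)
    rw [Finset.sum_eq_single π]
    · rw [if_pos]
      intro i j
      simp [h]
    · intro π' _ hne
      rw [if_neg]
      intro h'
      apply hne
      apply QR.perm_ext
      intro i j
      rw [← h' i j]
      simp [h]
    · simp
  simp_rw [h2]
  rw [← Finset.sum_product']
  symm
  refine Finset.sum_bij (fun p _ => fun i => p.1 (p.2 i)) ?_ ?_ ?_ ?_
  · intro p _
    simp only [Finset.mem_filter, Finset.mem_univ, true_and]
    exact p.1.injective.comp p.2.injective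
  · rintro ⟨e, τ⟩ _ ⟨e', τ'⟩ _ h
    simp only at h
    have hτ : τ = τ' := by
      apply QR.perm_ext
      intro i j
      have hi := congrFun h i
      have hj := congrFun h j
      rw [← e.lt_iff_lt, hi, hj, e'.lt_iff_lt]
    subst hτ
    have : e = e' := by
      ext i
      have := congrFun h (τ.symm i)
      simp at this
      rw [this]
    rw [this]
  · intro a ha
    simp only [Finset.mem_filter, Finset.mem_univ, true_and] at ha
    obtain ⟨e, π, h⟩ := QR.exists_pattern a ha
    exact ⟨(e, π), by simp, by funext i; simp [h]⟩
  · intro p _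
    rfl

/-- The count of occurrences as a sum over all tuples. -/
theorem QR.cnt_eq_sum {k n : ℕ} (π : Equiv.Perm (Fin k)) (Q : Equiv.Perm (Fin n)) :
    (QR.cnt π Q : ℝ) = ∑ a : Fin k → Fin n,
      (open scoped Classical in if StrictMono a then (1:ℝ) else 0) *
      (open scoped Classical in if (∀ i j, Q (a i) < Q (a j) ↔ π i < π j) then (1:ℝ) else 0) := by
  classical
  rw [QR.cnt_eq]
  simp_rw [ite_zero_mul_ite_zero, mul_one]
  rw [Finset.sum_boole]
  congr 1
  refine Finset.card_bij (fun e _ => e) ?_ ?_ ?_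
  · intro e he
    simp only [Finset.mem_filter, Finset.mem_univ, true_and] at he ⊢
    exact ⟨e.strictMono, he⟩
  · intro e _ e' _ h
    exact DFunLike.coe_injective h
  · intro a ha
    simp only [Finset.mem_filter, Finset.mem_univ, true_and] at ha
    exact ⟨OrderEmbedding.ofStrictMono a ha.1, by simp [ha.2], rfl⟩
theorem QR.sum4 {n : ℕ} (F : (Fin 4 → Fin n) → ℝ) :
    ∑ a : Fin 4 → Fin n, F a = ∑ i, ∑ j, ∑ k, ∑ l, F ![i, j, k, l] := by
  let e : (Fin n × Fin n × Fin n × Fin n) ≃ (Fin 4 → Fin n) :=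
    { toFun := fun p => ![p.1, p.2.1, p.2.2.1, p.2.2.2]
      invFun := fun a => (a 0, a 1, a 2, a 3)
      left_inv := by intro p; simp
      right_inv := by intro a; funext i; fin_cases i <;> simp }
  rw [← e.sum_comp]
  simp only [Fintype.sum_prod_type]
  rfl

theorem QR.injLim (P : ℕ → (n : ℕ) × Equiv.Perm (Fin n))
    (H : ∀ π : Equiv.Perm (Fin 4),
        Tendsto (fun i => PatternDensity π (P i).2) atTop (nhds (1 / 24 : ℝ)))
    (f g : (Fin 4 → ℕ) → ℝ) (hf : QR.OInv f) (hg : QR.OInv g) :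
    Tendsto (fun i => (open scoped Classical in
      ∑ a : Fin 4 → Fin (P i).1 with Function.Injective a,
        f (fun j => a j) * g (fun j => (P i).2 (a j))) / (((P i).1.choose 4 : ℕ) : ℝ)) atTop
      (nhds ((1 / 24) * ((∑ τ : Equiv.Perm (Fin 4), f (fun j => τ j)) *
        (∑ τ : Equiv.Perm (Fin 4), g (fun j => τ j))))) := by
  have h1 : ∀ i, (open scoped Classical in
      ∑ a : Fin 4 → Fin (P i).1 with Function.Injective a,
        f (fun j => a j) * g (fun j => (P i).2 (a j))) / (((P i).1.choose 4 : ℕ) : ℝ) =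
      ∑ π : Equiv.Perm (Fin 4), PatternDensity π (P i).2 *
        ∑ τ : Equiv.Perm (Fin 4), f (fun i => τ i) * g (fun i => π (τ i)) := by
    intro i
    rw [QR.key f g hf hg, Finset.sum_div]
    refine Finset.sum_congr rfl fun π _ => ?_
    rw [QR.density_eq]; ring
  have h2 : (1 / 24 : ℝ) * ((∑ τ : Equiv.Perm (Fin 4), f (fun j => τ j)) *
        (∑ τ : Equiv.Perm (Fin 4), g (fun j => τ j))) =
      ∑ π : Equiv.Perm (Fin 4), (1 / 24 : ℝ) *
        ∑ τ : Equiv.Perm (Fin 4), f (fun i => τ i) * g (fun i => π (τ i)) := by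
    rw [← Finset.mul_sum, Finset.sum_comm, Finset.sum_mul]
    congr 1
    refine Finset.sum_congr rfl fun τ _ => ?_
    rw [← Finset.mul_sum]
    congr 1
    exact (Equiv.sum_comp (Equiv.mulRight τ) (fun π : Equiv.Perm (Fin 4) => g (fun j => π j))).symm
  rw [h2]
  simp_rw [h1]
  exact tendsto_finsetSum _ fun π _ => (H π).mul_const _

/-- Sign of comparison. -/
noncomputable def QR.sg (x y : ℕ) : ℝ := if x < y then 1 else if y < x then -1 else 0

theorem QR.sg_inv {x y x' y' : ℕ} (h : x < y ↔ x' < y') (h' : y < x ↔ y' < x') :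
    QR.sg x y = QR.sg x' y' := by
  unfold QR.sg; simp only [h, h']

theorem QR.sum_perm4 (F : (Fin 4 → ℕ) → ℝ) :
    ∑ τ : Equiv.Perm (Fin 4), F (fun j => τ j) =
    ∑ i : Fin 4, ∑ j : Fin 4, ∑ k : Fin 4, ∑ l : Fin 4,
      if (i ≠ j ∧ i ≠ k ∧ i ≠ l ∧ j ≠ k ∧ j ≠ l ∧ k ≠ l) then F ![i, j, k, l] else 0 := by
  refine Eq.trans ?_ (QR.sum4 (n := 4) (fun a => if (a 0 ≠ a 1 ∧ a 0 ≠ a 2 ∧ a 0 ≠ a 3 ∧ a 1 ≠ a 2 ∧ a 1 ≠ a 3 ∧ a 2 ≠ a 3)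
    then F ![a 0, a 1, a 2, a 3] else 0))
  rw [← Finset.sum_filter]
  refine Finset.sum_bij (fun τ _ => fun j => τ j) ?_ ?_ ?_ ?_
  · intro τ _
    simp
  · intro τ _ τ' _ h
    exact DFunLike.coe_injective h
  · intro a ha
    simp only [Finset.mem_filter, Finset.mem_univ, true_and] at ha
    have hi : Function.Injective a := by
      intro i j hij
      obtain ⟨h1, h2, h3, h4, h5, h6⟩ := ha
      fin_cases i <;> fin_cases j <;> simp_all
    exact ⟨Equiv.ofBijective a (Finite.injective_iff_bijective.mp hi), by simp, rfl⟩
  · intro τ _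
    congr 1
    funext i; fin_cases i <;> rfl

theorem QR.card_ne3 {n : ℕ} (i j k : Fin n) (h1 : i ≠ j) (h2 : i ≠ k) (h3 : j ≠ k) :
    ∑ l : Fin n, (if (i ≠ l ∧ j ≠ l ∧ k ≠ l) then (1:ℝ) else 0) = n - 3 := by
  rw [Finset.sum_boole]
  have : (Finset.univ.filter fun l => i ≠ l ∧ j ≠ l ∧ k ≠ l) = ({i, j, k} : Finset (Fin n))ᶜ := by
    ext l; simp [eq_comm]
  have hc : ({i, j, k} : Finset (Fin n)).card = 3 := Finset.card_eq_three.2 ⟨i, j, k, h1, h2, h3, rfl⟩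
  have hle : ({i, j, k} : Finset (Fin n)).card ≤ n := by
    simpa using Finset.card_le_univ ({i, j, k} : Finset (Fin n))
  rw [this, Finset.card_compl, hc, Fintype.card_fin, Nat.cast_sub (by omega)]
  norm_num

theorem QR.card_ne2 {n : ℕ} (i j : Fin n) (h1 : i ≠ j) :
    ∑ l : Fin n, (if (i ≠ l ∧ j ≠ l) then (1:ℝ) else 0) = n - 2 := by
  rw [Finset.sum_boole]
  have : (Finset.univ.filter fun l => i ≠ l ∧ j ≠ l) = ({i, j} : Finset (Fin n))ᶜ := by
    ext l; simp [eq_comm]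
  have hc : ({i, j} : Finset (Fin n)).card = 2 := Finset.card_eq_two.2 ⟨i, j, h1, rfl⟩
  have hle : ({i, j} : Finset (Fin n)).card ≤ n := by
    simpa using Finset.card_le_univ ({i, j} : Finset (Fin n))
  rw [this, Finset.card_compl, hc, Fintype.card_fin, Nat.cast_sub (by omega)]
  norm_num

theorem QR.inj4 {n : ℕ} (a : Fin 4 → Fin n) : Function.Injective a ↔
    (a 0 ≠ a 1 ∧ a 0 ≠ a 2 ∧ a 1 ≠ a 2) ∧ (a 0 ≠ a 3 ∧ a 1 ≠ a 3 ∧ a 2 ≠ a 3) := by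
  constructor
  · intro h
    simp [h.eq_iff]
  · rintro ⟨⟨h1, h2, h3⟩, h4, h5, h6⟩ i j hij
    fin_cases i <;> fin_cases j <;> simp_all

open scoped Classical in
theorem QR.injSum3 {n : ℕ} (h : Fin n → Fin n → Fin n → ℝ) :
    ∑ a : Fin 4 → Fin n with Function.Injective a, h (a 0) (a 1) (a 2) =
    (n - 3) * ∑ i, ∑ j, ∑ k, if (i ≠ j ∧ i ≠ k ∧ j ≠ k) then h i j k else 0 := by
  rw [Finset.sum_filter, QR.sum4, Finset.mul_sum]
  refine Finset.sum_congr rfl fun i _ => ?_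
  rw [Finset.mul_sum]
  refine Finset.sum_congr rfl fun j _ => ?_
  rw [Finset.mul_sum]
  refine Finset.sum_congr rfl fun k _ => ?_
  simp only [QR.inj4]
  simp only [Matrix.cons_val]
  by_cases hd : i ≠ j ∧ i ≠ k ∧ j ≠ k
  · rw [if_pos hd, ← QR.card_ne3 i j k hd.1 hd.2.1 hd.2.2, Finset.sum_mul]
    refine Finset.sum_congr rfl fun l _ => ?_
    simp [hd]
  · simp [hd]

open scoped Classical in
theorem QR.injSum2 {n : ℕ} (h : Fin n → Fin n → ℝ) :
    ∑ a : Fin 4 → Fin n with Function.Injective a, h (a 0) (a 1) =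
    (n - 3) * ((n - 2) * ∑ i, ∑ j, if i ≠ j then h i j else 0) := by
  rw [QR.injSum3 (fun i j _ => h i j)]
  congr 1
  rw [Finset.mul_sum]
  refine Finset.sum_congr rfl fun i _ => ?_
  rw [Finset.mul_sum]
  refine Finset.sum_congr rfl fun j _ => ?_
  by_cases hd : i ≠ j
  · rw [if_pos hd, ← QR.card_ne2 i j hd, Finset.sum_mul]
    refine Finset.sum_congr rfl fun l _ => ?_
    simp [hd]
  · simp [hd]

open scoped Classical in
theorem QR.Ksq {n : ℕ} (S : Fin n → Fin n → ℝ) (hs : ∀ i j, S i j = S j i) (h0 : ∀ i, S i i = 0)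
    (h1 : ∀ i j, i ≠ j → S i j * S i j = 1) :
    (∑ i, ∑ j, S i j) ^ 2 =
      (∑ a : Fin 4 → Fin n with Function.Injective a, S (a 0) (a 1) * S (a 2) (a 3)) +
      4 * (∑ i, ∑ j, ∑ k, if (i ≠ j ∧ i ≠ k ∧ j ≠ k) then S i j * S i k else 0) +
      2 * (n * (n - 1)) := by
  have hsq : ∑ i, ∑ j, S i j * S i j = (n : ℝ) * (n - 1) := by
    have : ∀ i, ∑ j, S i j * S i j = (n : ℝ) - 1 := by
      intro i
      rw [← Finset.add_sum_erase _ _ (Finset.mem_univ i), h0, 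
        Finset.sum_congr rfl (g := fun _ => (1:ℝ))]
      · simp [Finset.card_erase_of_mem]
        rw [Nat.cast_sub (by have := i.2; omega)]; simp
      · intro j hj
        exact h1 i j (Finset.ne_of_mem_erase hj).symm
    simp only [this, Finset.sum_const, Finset.card_univ, Fintype.card_fin, nsmul_eq_mul]
  have hW : (∑ i, ∑ j, ∑ k, if (i ≠ j ∧ i ≠ k ∧ j ≠ k) then S i j * S i k else 0) =
      (∑ i, ∑ j, ∑ k, S i j * S i k) - n * (n - 1) := by
    rw [← hsq, ← Finset.sum_sub_distrib]
    refine Finset.sum_congr rfl fun i _ => ?_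
    rw [← Finset.sum_sub_distrib]
    refine Finset.sum_congr rfl fun j _ => ?_
    have : S i j * S i j = ∑ k, if j = k then S i j * S i k else 0 := by simp
    rw [this, ← Finset.sum_sub_distrib]
    refine Finset.sum_congr rfl fun k _ => ?_
    by_cases e1 : i = j
    · subst e1; simp [h0]
    by_cases e2 : i = k
    · subst e2; simp [h0]
    by_cases e3 : j = k
    · simp [e3]
    · simp [e1, e2, e3]
  have hpt : ∀ i j k l : Fin n, S i j * S k l =
      (if Function.Injective ![i, j, k, l] then S i j * S k l else 0) +
      (if k = i then S i j * S k l else 0) + (if l = i then S i j * S k l else 0) +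
      (if k = j then S i j * S k l else 0) + (if l = j then S i j * S k l else 0) -
      (if k = i then if l = j then S i j * S k l else 0 else 0) -
      (if k = j then if l = i then S i j * S k l else 0 else 0) := by
    intro i j k l
    simp only [QR.inj4, Matrix.cons_val]
    by_cases e1 : i = j
    · subst e1; simp [h0]
    by_cases e2 : k = l
    · subst e2; simp [h0]
    by_cases e3 : k = i
    · subst e3
      by_cases e4 : l = j
      · subst e4; simp [e1, Ne.symm e1]
      · have : j ≠ l := fun h => e4 h.symm
        have : l ≠ k := fun h => e2 h.symm
        simp [*]
    by_cases e5 : k = j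
    · subst e5
      by_cases e4 : l = i
      · subst e4; simp [e1, Ne.symm e1]
      · have : i ≠ l := fun h => e4 h.symm
        have : l ≠ k := fun h => e2 h.symm
        simp [*]
    have e3' : i ≠ k := fun h => e3 h.symm
    have e5' : j ≠ k := fun h => e5 h.symm
    by_cases e6 : l = i
    · subst e6
      simp [*]
    by_cases e7 : l = j
    · subst e7; simp [*]
    have e6' : i ≠ l := fun h => e6 h.symm
    have e7' : j ≠ l := fun h => e7 h.symm
    simp [*]
  have hK : (∑ i, ∑ j, S i j) ^ 2 = ∑ i, ∑ j, ∑ k, ∑ l, S i j * S k l := by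
    rw [sq, Finset.sum_mul]
    refine Finset.sum_congr rfl fun i _ => ?_
    rw [Finset.sum_mul]
    refine Finset.sum_congr rfl fun j _ => ?_
    rw [Finset.mul_sum]
    refine Finset.sum_congr rfl fun k _ => ?_
    rw [Finset.mul_sum]
  have hA : (∑ a : Fin 4 → Fin n with Function.Injective a, S (a 0) (a 1) * S (a 2) (a 3)) =
      ∑ i, ∑ j, ∑ k, ∑ l, (if Function.Injective ![i, j, k, l] then S i j * S k l else 0) := by
    rw [Finset.sum_filter, QR.sum4]
    simp
  have hK2 : (∑ i, ∑ j, S i j) ^ 2 =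
      (∑ i, ∑ j, ∑ k, ∑ l, (if Function.Injective ![i, j, k, l] then S i j * S k l else 0)) +
      (∑ i, ∑ j, ∑ l, S i j * S i l) + (∑ i, ∑ j, ∑ l, S i j * S l i) +
      (∑ i, ∑ j, ∑ l, S i j * S j l) + (∑ i, ∑ j, ∑ l, S i j * S l j) -
      (∑ i, ∑ j, S i j * S i j) - (∑ i, ∑ j, S i j * S j i) := by
    rw [hK]
    simp_rw [← Finset.sum_add_distrib, ← Finset.sum_sub_distrib]
    refine Finset.sum_congr rfl fun i _ => Finset.sum_congr rfl fun j _ => ?_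
    simp_rw [Finset.sum_congr rfl (fun k _ => Finset.sum_congr rfl (fun l _ => hpt i j k l))]
    simp_rw [Finset.sum_add_distrib, Finset.sum_sub_distrib, Finset.sum_add_distrib]
    have z1 : ∑ k, ∑ l, (if k = i then S i j * S k l else 0) = ∑ l, S i j * S i l := by
      rw [Finset.sum_comm]; simp
    have z3 : ∑ k, ∑ l, (if k = j then S i j * S k l else 0) = ∑ l, S i j * S j l := by
      rw [Finset.sum_comm]; simp
    have z2 : ∑ k, ∑ l, (if l = i then S i j * S k l else 0) = ∑ l, S i j * S l i := by
      simp
    have z4 : ∑ k, ∑ l, (if l = j then S i j * S k l else 0) = ∑ l, S i j * S l j := by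
      simp
    have z5 : ∑ k, ∑ l, (if k = i then if l = j then S i j * S k l else 0 else 0) = S i j * S i j := by
      rw [Finset.sum_eq_single i]
      · simp
      · intro b _ hb; simp [hb]
      · simp
    have z6 : ∑ k, ∑ l, (if k = j then if l = i then S i j * S k l else 0 else 0) = S i j * S j i := by
      rw [Finset.sum_eq_single j]
      · simp
      · intro b _ hb; simp [hb]
      · simp
    rw [z1, z2, z3, z4, z5, z6]
  have y2 : (∑ i, ∑ j, ∑ l, S i j * S l i) = ∑ i, ∑ j, ∑ l, S i j * S i l := by
    refine Finset.sum_congr rfl fun i _ => Finset.sum_congr rfl fun j _ =>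
      Finset.sum_congr rfl fun l _ => ?_
    rw [hs l i]
  have y3 : (∑ i, ∑ j, ∑ l, S i j * S j l) = ∑ i, ∑ j, ∑ l, S i j * S i l := by
    rw [Finset.sum_comm]
    refine Finset.sum_congr rfl fun i _ => Finset.sum_congr rfl fun j _ =>
      Finset.sum_congr rfl fun l _ => ?_
    rw [hs j i]
  have y4 : (∑ i, ∑ j, ∑ l, S i j * S l j) = ∑ i, ∑ j, ∑ l, S i j * S i l := by
    rw [Finset.sum_comm]
    refine Finset.sum_congr rfl fun i _ => Finset.sum_congr rfl fun j _ =>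
      Finset.sum_congr rfl fun l _ => ?_
    rw [hs j i, hs l i]
  have y5 : (∑ i, ∑ j, S i j * S j i) = ∑ i, ∑ j, S i j * S i j := by
    refine Finset.sum_congr rfl fun i _ => Finset.sum_congr rfl fun j _ => ?_
    rw [hs j i]
  rw [hK2, hA, hW, y2, y3, y4, y5, hsq]
  ring
/-- two below a third -/
noncomputable def QR.bl (p q r : Fin 4) (u : Fin 4 → ℕ) : ℝ :=
  if u p < u r ∧ u q < u r then 1 else 0

theorem QR.bl_inv (p q r : Fin 4) : QR.OInv (QR.bl p q r) := by
  intro u v h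
  unfold QR.bl; simp only [h]

theorem QR.sg_sum1 : ∑ τ : Equiv.Perm (Fin 4), QR.sg (τ 0) (τ 1) = 0 := by
  rw [QR.sum_perm4 (fun u => QR.sg (u 0) (u 1))]
  simp [Fin.sum_univ_four, QR.sg]
  norm_num

theorem QR.sg_sum2 : ∑ τ : Equiv.Perm (Fin 4), QR.sg (τ 0) (τ 1) * QR.sg (τ 2) (τ 3) = 0 := by
  rw [QR.sum_perm4 (fun u => QR.sg (u 0) (u 1) * QR.sg (u 2) (u 3))]
  simp [Fin.sum_univ_four, QR.sg]

theorem QR.sg_sum3 : ∑ τ : Equiv.Perm (Fin 4), QR.sg (τ 0) (τ 1) * QR.sg (τ 0) (τ 2) = 8 := by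
  rw [QR.sum_perm4 (fun u => QR.sg (u 0) (u 1) * QR.sg (u 0) (u 2))]
  simp [Fin.sum_univ_four, QR.sg]
  norm_num

theorem QR.bl_sum1 : ∑ τ : Equiv.Perm (Fin 4), QR.bl 0 1 2 (fun j => τ j) = 8 := by
  rw [QR.sum_perm4]
  simp [Fin.sum_univ_four, QR.bl]
  norm_num

theorem QR.bl_sum2 : ∑ τ : Equiv.Perm (Fin 4), QR.bl 0 1 3 (fun j => τ j) = 8 := by
  rw [QR.sum_perm4]
  simp [Fin.sum_univ_four, QR.bl]
  norm_num

theorem QR.bl_sum3 : ∑ τ : Equiv.Perm (Fin 4), QR.bl 1 2 0 (fun j => τ j) = 8 := by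
  rw [QR.sum_perm4]
  simp [Fin.sum_univ_four, QR.bl]
  norm_num

theorem QR.bl_sum4 : ∑ τ : Equiv.Perm (Fin 4), QR.bl 1 3 0 (fun j => τ j) = 8 := by
  rw [QR.sum_perm4]
  simp [Fin.sum_univ_four, QR.bl]
  norm_num

theorem QR.order_atTop (P : ℕ → (n : ℕ) × Equiv.Perm (Fin n))
    (H : ∀ π : Equiv.Perm (Fin 4),
        Tendsto (fun i => PatternDensity π (P i).2) atTop (nhds (1 / 24 : ℝ))) :
    Tendsto (fun i => (P i).1) atTop atTop := by
  classical
  have inv1 : QR.OInv (k := 4) (fun u => QR.sg (u 0) (u 1)) :=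
    fun u v h => QR.sg_inv (h _ _) (h _ _)
  have inv2 : QR.OInv (k := 4) (fun u => QR.sg (u 0) (u 1) * QR.sg (u 2) (u 3)) :=
    fun u v h => congrArg₂ _ (QR.sg_inv (h _ _) (h _ _)) (QR.sg_inv (h _ _) (h _ _))
  have inv3 : QR.OInv (k := 4) (fun u => QR.sg (u 0) (u 1) * QR.sg (u 0) (u 2)) :=
    fun u v h => congrArg₂ _ (QR.sg_inv (h _ _) (h _ _)) (QR.sg_inv (h _ _) (h _ _))
  have L1 := QR.injLim P H _ _ inv1 inv1
  have L2 := QR.injLim P H _ _ inv2 inv2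
  have L3 := QR.injLim P H _ _ inv3 inv3
  simp only [QR.sg_sum1, QR.sg_sum2, QR.sg_sum3] at L1 L2 L3
  norm_num at L1 L2 L3
  rw [tendsto_atTop]
  intro N
  have h4 : ∀ᶠ i in atTop, 4 ≤ (P i).1 := by
    have := (H 1).eventually (lt_mem_nhds (show (0:ℝ) < 1/24 by norm_num))
    filter_upwards [this] with i hi
    by_contra hlt
    rw [QR.density_eq, Nat.choose_eq_zero_of_lt (by omega)] at hi
    simp at hi
  have hε : (0:ℝ) < 1 / (N ^ 4 + 1) := by positivity
  have E1 := L1.eventually (Metric.ball_mem_nhds _ hε)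
  have E2 := L2.eventually (Metric.ball_mem_nhds _ hε)
  have E3 := L3.eventually (lt_mem_nhds (show (0:ℝ) < 8/3 by norm_num))
  filter_upwards [h4, E1, E2, E3] with i h4 E1 E2 E3
  by_contra hN
  push Not at hN
  generalize P i = p at h4 E1 E2 E3 hN
  obtain ⟨n, Q⟩ := p
  change 4 ≤ n at h4
  change n < N at hN
  let S : Fin n → Fin n → ℝ := fun i j => QR.sg i j * QR.sg (Q i) (Q j)
  have hC : (0:ℝ) < (n.choose 4 : ℝ) := by exact_mod_cast Nat.choose_pos h4
  have hCN : (n.choose 4 : ℝ) ≤ (N:ℝ) ^ 4 := by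
    have h1 : n.choose 4 ≤ n ^ 4 := Nat.choose_le_pow n 4
    have h2 : n ^ 4 ≤ N ^ 4 := Nat.pow_le_pow_left hN.le 4
    exact_mod_cast h1.trans h2
  have aux : ∀ x : ℝ, x / (n.choose 4 : ℝ) ∈ Metric.ball (0:ℝ) (1 / (N ^ 4 + 1)) → |x| < 1 := by
    intro x hx
    rw [mem_ball_zero_iff, Real.norm_eq_abs, abs_div, abs_of_pos hC, div_lt_iff₀ hC] at hx
    refine hx.trans_le ?_
    rw [div_mul_eq_mul_div, one_mul, div_le_one (by positivity)]
    linarith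
  have B1 := aux _ E1
  have B2 := aux _ E2
  have B3 := (div_pos_iff_of_pos_right hC).1 E3
  have s1 : ∑ a : Fin 4 → Fin n with Function.Injective a, QR.sg (a 0) (a 1) * QR.sg (Q (a 0)) (Q (a 1))
      = (n - 3) * ((n - 2) * ∑ i, ∑ j, S i j) := by
    rw [QR.injSum2 (fun i j => S i j)]
    congr 2
    refine Finset.sum_congr rfl fun i _ => Finset.sum_congr rfl fun j _ => ?_
    by_cases h : i = j
    · simp [h, S, QR.sg]
    · simp [h]
  have s2 : ∑ a : Fin 4 → Fin n with Function.Injective a,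
      QR.sg (a 0) (a 1) * QR.sg (a 2) (a 3) * (QR.sg (Q (a 0)) (Q (a 1)) * QR.sg (Q (a 2)) (Q (a 3)))
      = ∑ a : Fin 4 → Fin n with Function.Injective a, S (a 0) (a 1) * S (a 2) (a 3) := by
    refine Finset.sum_congr rfl fun a _ => ?_
    simp only [S]; ring
  have s3 : ∑ a : Fin 4 → Fin n with Function.Injective a,
      QR.sg (a 0) (a 1) * QR.sg (a 0) (a 2) * (QR.sg (Q (a 0)) (Q (a 1)) * QR.sg (Q (a 0)) (Q (a 2)))
      = (n - 3) * (∑ i, ∑ j, ∑ k, if (i ≠ j ∧ i ≠ k ∧ j ≠ k) then S i j * S i k else 0) := by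
    rw [← QR.injSum3 (fun i j k => S i j * S i k)]
    refine Finset.sum_congr rfl fun a _ => ?_
    simp only [S]; ring
  rw [s1] at B1
  rw [s2] at B2
  rw [s3] at B3
  have hsgsymm : ∀ x y : ℕ, QR.sg x y = - QR.sg y x := by
    intro x y; unfold QR.sg
    rcases lt_trichotomy x y with h | h | h
    · simp [h, h.not_gt]
    · simp [h]
    · simp [h, h.not_gt]
  have hsgsq : ∀ x y : ℕ, x ≠ y → QR.sg x y * QR.sg x y = 1 := by
    intro x y hxy; unfold QR.sg
    rcases lt_or_gt_of_ne hxy with h | h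
    · simp [h]
    · simp [h, h.not_gt]
  have hK := QR.Ksq S (by
      intro i j; simp only [S]; rw [hsgsymm i j, hsgsymm (Q i) (Q j)]; ring)
    (by intro i; simp [S, QR.sg])
    (by
      intro i j hij
      have h1 := hsgsq i j (by simpa [Fin.val_inj] using hij)
      have h2 := hsgsq (Q i) (Q j) (by simpa [Fin.val_inj] using hij)
      simp only [S]
      calc _ = (QR.sg i j * QR.sg i j) * (QR.sg (Q i) (Q j) * QR.sg (Q i) (Q j)) := by ring
        _ = 1 := by rw [h1, h2]; ring)
  have hn : (4:ℝ) ≤ n := by exact_mod_cast h4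
  have hW := (mul_pos_iff_of_pos_left (by linarith : (0:ℝ) < n - 3)).1 B3
  set K := ∑ i, ∑ j, S i j
  have hK1 : |K| < 1 := by
    rw [abs_mul, abs_mul, abs_of_pos (by linarith : (0:ℝ) < n - 3),
      abs_of_pos (by linarith : (0:ℝ) < n - 2)] at B1
    have : |K| ≤ (n - 3) * ((n - 2) * |K|) := by
      have := abs_nonneg K
      nlinarith [mul_nonneg (by linarith : (0:ℝ) ≤ n - 4) this, mul_nonneg (mul_nonneg (by linarith : (0:ℝ) ≤ n - 4) (by linarith : (0:ℝ) ≤ n - 4)) this]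
    linarith
  have hK2 : K ^ 2 < 1 := by
    rw [← sq_abs]; nlinarith [abs_nonneg K]
  have := (abs_lt.1 B2).1
  nlinarith

theorem QR.choose_lim (k : ℕ) :
    Tendsto (fun n : ℕ => ((n.choose k : ℕ) : ℝ) / (n:ℝ) ^ k) atTop (nhds (1 / (k.factorial : ℝ))) := by
  have h := (isEquivalent_choose k)
  have h2 := (Asymptotics.isEquivalent_iff_tendsto_one (by
    filter_upwards [eventually_gt_atTop 0] with n hn
    positivity)).1 h
  have h3 := h2.mul_const (1 / (k.factorial : ℝ))
  rw [one_mul] at h3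
  refine h3.congr fun n => ?_
  simp only [Pi.div_apply]
  have : (k.factorial : ℝ) ≠ 0 := by positivity
  field_simp

open scoped Classical in
theorem QR.card_inj (k n : ℕ) :
    (Finset.univ.filter fun a : Fin k → Fin n => Function.Injective a).card = k.factorial * n.choose k := by
  rw [← Nat.descFactorial_eq_factorial_mul_choose, ← Fintype.card_subtype,
    Fintype.card_congr (Equiv.subtypeInjectiveEquivEmbedding _ _), Fintype.card_embedding_eq]
  simp

theorem QR.fullLim (P : ℕ → (n : ℕ) × Equiv.Perm (Fin n))
    (H : ∀ π : Equiv.Perm (Fin 4),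
        Tendsto (fun i => PatternDensity π (P i).2) atTop (nhds (1 / 24 : ℝ)))
    (f g : (Fin 4 → ℕ) → ℝ) (hf : QR.OInv f) (hg : QR.OInv g)
    (hf1 : ∀ u, |f u| ≤ 1) (hg1 : ∀ u, |g u| ≤ 1)
    (hfs : ∑ τ : Equiv.Perm (Fin 4), f (fun j => τ j) = 8)
    (hgs : ∑ τ : Equiv.Perm (Fin 4), g (fun j => τ j) = 8) :
    Tendsto (fun i => (∑ a : Fin 4 → Fin (P i).1,
        f (fun j => a j) * g (fun j => (P i).2 (a j))) / ((P i).1 : ℝ) ^ 4) atTop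
      (nhds (1 / 9)) := by
  classical
  have hn := QR.order_atTop P H
  have hC := (QR.choose_lim 4).comp hn
  have L := QR.injLim P H f g hf hg
  rw [hfs, hgs] at L
  have M := L.mul hC
  have D : Tendsto (fun i => 1 - 24 * (((P i).1.choose 4 : ℕ) : ℝ) / ((P i).1:ℝ) ^ 4) atTop (nhds 0) := by
    have := (hC.const_mul 24).const_sub 1
    simp only [Nat.factorial, Function.comp] at this
    norm_num at this
    refine this.congr fun i => ?_
    ring
  have D2 : Tendsto (fun i => (∑ a : Fin 4 → Fin (P i).1 with ¬ Function.Injective a,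
        f (fun j => a j) * g (fun j => (P i).2 (a j))) / ((P i).1 : ℝ) ^ 4) atTop (nhds 0) := by
    refine squeeze_zero_norm' ?_ D
    filter_upwards [hn.eventually (eventually_gt_atTop 0)] with i hi
    have hp : (0:ℝ) < ((P i).1 : ℝ) ^ 4 := by positivity
    rw [norm_div, Real.norm_of_nonneg hp.le, div_le_iff₀ hp, sub_mul, div_mul_cancel₀ _ hp.ne', one_mul]
    have hc := Finset.card_filter_add_card_filter_not (s := (Finset.univ : Finset (Fin 4 → Fin (P i).1)))
      (fun a => Function.Injective a)
    rw [QR.card_inj, Finset.card_univ, Fintype.card_fun, Fintype.card_fin, Fintype.card_fin] at hc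
    have hc' : (24:ℝ) * ((P i).1.choose 4 : ℕ) + ((Finset.univ.filter fun a : Fin 4 → Fin (P i).1 => ¬ Function.Injective a).card : ℝ)
      = ((P i).1 : ℝ) ^ 4 := by
      have : Nat.factorial 4 = 24 := rfl
      rw [this] at hc
      exact_mod_cast hc
    rw [← hc', add_sub_cancel_left]
    refine (norm_sum_le _ _).trans ?_
    refine (Finset.sum_le_card_nsmul _ _ 1 ?_).trans ?_
    · intro a _
      rw [norm_mul]
      exact mul_le_one₀ (hf1 _) (norm_nonneg _) (hg1 _)
    · simp
  have M2 := M.add D2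
  have e : (1 / 24 * (8 * 8) * (1 / ((Nat.factorial 4 : ℕ) : ℝ)) + 0 : ℝ) = 1 / 9 := by
    norm_num [Nat.factorial]
  rw [e] at M2
  refine M2.congr' ?_
  filter_upwards [hn.eventually (eventually_ge_atTop 4)] with i hi
  have hcp : (0:ℝ) < ((P i).1.choose 4 : ℕ) := by exact_mod_cast Nat.choose_pos hi
  rw [← Finset.sum_filter_add_sum_filter_not Finset.univ (fun a => Function.Injective a), add_div]
  congr 1
  simp only [Function.comp]
  field_simp
/-- Counting function of a permutation. -/
noncomputable def QR.F {n : ℕ} (Q : Equiv.Perm (Fin n)) (x y : ℕ) : ℝ :=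
  ∑ j : Fin n, if ((j : ℕ) < x ∧ (Q j : ℕ) < y) then 1 else 0

/-- Indicator of `x < y`. -/
noncomputable def QR.lt1 (x y : ℕ) : ℝ := if x < y then 1 else 0

theorem QR.bl_eq (p q r : Fin 4) (u : Fin 4 → ℕ) :
    QR.bl p q r u = QR.lt1 (u p) (u r) * QR.lt1 (u q) (u r) := by
  unfold QR.bl QR.lt1
  rw [ite_zero_mul_ite_zero]
  simp

theorem QR.F_eq {n : ℕ} (Q : Equiv.Perm (Fin n)) (x y : ℕ) :
    QR.F Q x y = ∑ j : Fin n, QR.lt1 j x * QR.lt1 (Q j) y := by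
  unfold QR.F QR.lt1
  refine Finset.sum_congr rfl fun j _ => ?_
  rw [ite_zero_mul_ite_zero]
  simp

/-- Discrepancy. -/
noncomputable def QR.D {n : ℕ} (Q : Equiv.Perm (Fin n)) (x y : ℕ) : ℝ :=
  QR.F Q x y - x * y / n

theorem QR.sum_c {n : ℕ} (Q : Equiv.Perm (Fin n)) :
    ∑ a : Fin 4 → Fin n, QR.bl 0 1 2 (fun j => a j) * QR.bl 0 1 3 (fun j => Q (a j)) =
    ∑ x : Fin n, ∑ y : Fin n, QR.F Q x y ^ 2 := by
  rw [QR.sum4]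
  have h : ∀ k l : Fin n, QR.F Q k (Q l) ^ 2 = ∑ i : Fin n, ∑ j : Fin n,
      QR.bl 0 1 2 (fun m => ((![i, j, k, l] m : Fin n) : ℕ)) *
      QR.bl 0 1 3 (fun m => ((Q (![i, j, k, l] m) : Fin n) : ℕ)) := by
    intro k l
    rw [sq, QR.F_eq, Finset.sum_mul_sum]
    refine Finset.sum_congr rfl fun i _ => Finset.sum_congr rfl fun j _ => ?_
    simp only [QR.bl_eq, Matrix.cons_val]
    ring
  have h2 : ∑ x : Fin n, ∑ y : Fin n, QR.F Q x y ^ 2 = ∑ x : Fin n, ∑ y : Fin n, QR.F Q x (Q y) ^ 2 := by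
    refine Finset.sum_congr rfl fun x _ => ?_
    exact (Equiv.sum_comp Q (fun y => QR.F Q x y ^ 2)).symm
  rw [h2]
  simp_rw [h]
  calc _ = ∑ i : Fin n, ∑ k : Fin n, ∑ l : Fin n, ∑ j : Fin n, QR.bl 0 1 2 (fun m => ((![i, j, k, l] m : Fin n) : ℕ)) *
      QR.bl 0 1 3 (fun m => ((Q (![i, j, k, l] m) : Fin n) : ℕ)) := by
        refine Finset.sum_congr rfl fun i _ => ?_
        rw [Finset.sum_comm]
        refine Finset.sum_congr rfl fun k _ => ?_
        rw [Finset.sum_comm]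
    _ = _ := by
        rw [Finset.sum_comm]
        refine Finset.sum_congr rfl fun k _ => ?_
        rw [Finset.sum_comm]

theorem QR.sum_lt {n : ℕ} (i : Fin n) : ∑ j : Fin n, QR.lt1 j i = i := by
  unfold QR.lt1
  rw [Fin.sum_univ_eq_sum_range (fun j => if j < (i:ℕ) then (1:ℝ) else 0), Finset.sum_boole]
  congr 1
  have : (Finset.range n).filter (fun j => j < (i:ℕ)) = Finset.range i := by
    ext j; have := i.2; simp; omega
  rw [this, Finset.card_range]

theorem QR.sum_a {n : ℕ} (Q : Equiv.Perm (Fin n)) :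
    ∑ a : Fin 4 → Fin n, QR.bl 1 2 0 (fun j => a j) * QR.bl 1 2 0 (fun j => Q (a j)) =
    n * ∑ i : Fin n, QR.F Q i (Q i) ^ 2 := by
  rw [QR.sum4, Finset.mul_sum]
  refine Finset.sum_congr rfl fun i _ => ?_
  rw [sq, QR.F_eq, Finset.sum_mul_sum, Finset.mul_sum]
  refine Finset.sum_congr rfl fun j _ => ?_
  rw [Finset.mul_sum]
  refine Finset.sum_congr rfl fun k _ => ?_
  simp only [QR.bl_eq, Matrix.cons_val]
  rw [Finset.sum_const, Finset.card_univ, Fintype.card_fin, nsmul_eq_mul]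
  ring

theorem QR.sum_b {n : ℕ} (Q : Equiv.Perm (Fin n)) :
    ∑ a : Fin 4 → Fin n, QR.bl 1 2 0 (fun j => a j) * QR.bl 1 3 0 (fun j => Q (a j)) =
    ∑ i : Fin n, QR.F Q i (Q i) * i * (Q i) := by
  rw [QR.sum4]
  refine Finset.sum_congr rfl fun i _ => ?_
  have h1 : ((Q i : ℕ) : ℝ) = ∑ l : Fin n, QR.lt1 (Q l) (Q i) := by
    rw [Equiv.sum_comp Q (fun l => QR.lt1 l (Q i)), QR.sum_lt]
  rw [h1, ← QR.sum_lt i, QR.F_eq, Finset.sum_mul_sum, Finset.sum_mul]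
  refine Finset.sum_congr rfl fun j _ => ?_
  rw [Finset.sum_mul_sum]
  refine Finset.sum_congr rfl fun k _ => ?_
  refine Finset.sum_congr rfl fun l _ => ?_
  simp only [QR.bl_eq, Matrix.cons_val]
  ring

theorem QR.sum_gt (n j : ℕ) (h : j < n) :
    ∑ x : Fin n, (if j < (x : ℕ) then ((x:ℕ):ℝ) else 0) = ((n:ℝ) ^ 2 - n - j ^ 2 - j) / 2 := by
  rw [Fin.sum_univ_eq_sum_range (fun x => if j < x then (x:ℝ) else 0)]
  induction n, h using Nat.le_induction with
  | base =>
    rw [Finset.sum_eq_zero]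
    · push_cast; ring
    · intro x hx
      rw [Finset.mem_range] at hx
      rw [if_neg (by omega)]
  | succ m hm ih =>
    rw [Finset.sum_range_succ, ih, if_pos (by omega)]
    push_cast; ring

theorem QR.sum_sq1 (n : ℕ) : ∑ x : Fin n, ((x:ℕ):ℝ) ^ 2 = ((n:ℝ) - 1) * n * (2 * n - 1) / 6 := by
  rw [Fin.sum_univ_eq_sum_range (fun x => (x:ℝ) ^ 2)]
  induction n with
  | zero => simp
  | succ m ih => rw [Finset.sum_range_succ, ih]; push_cast; ring

theorem QR.sum_sq2 (n : ℕ) : ∑ x : Fin n, (((x:ℕ):ℝ) ^ 2 + (x : ℕ)) = ((n:ℝ) - 1) * n * (n + 1) / 3 := by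
  rw [Fin.sum_univ_eq_sum_range (fun x => (x:ℝ) ^ 2 + x)]
  induction n with
  | zero => simp
  | succ m ih => rw [Finset.sum_range_succ, ih]; push_cast; ring

theorem QR.sum_Fxy {n : ℕ} (Q : Equiv.Perm (Fin n)) :
    ∑ x : Fin n, ∑ y : Fin n, QR.F Q x y * (x * y) =
    ∑ j : Fin n, ((n:ℝ) ^ 2 - n - j ^ 2 - j) / 2 * (((n:ℝ) ^ 2 - n - (Q j) ^ 2 - (Q j)) / 2) := by
  simp_rw [← QR.sum_gt n _ (Fin.is_lt _), Finset.sum_mul_sum]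
  simp_rw [QR.F, Finset.sum_mul]
  calc _ = ∑ x : Fin n, ∑ j : Fin n, ∑ y : Fin n,
        (if ((j : ℕ) < x ∧ (Q j : ℕ) < y) then (1:ℝ) else 0) * (x * y) := by
        refine Finset.sum_congr rfl fun x _ => ?_
        rw [Finset.sum_comm]
    _ = _ := by
        rw [Finset.sum_comm]
        refine Finset.sum_congr rfl fun j _ => ?_
        refine Finset.sum_congr rfl fun x _ => ?_
        refine Finset.sum_congr rfl fun y _ => ?_
        rw [ite_zero_mul_ite_zero]
        simp

theorem QR.L2_bound {n : ℕ} (hn : 0 < n) (Q : Equiv.Perm (Fin n)) :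
    (∑ x : Fin n, ∑ y : Fin n, QR.D Q x y ^ 2) / (n:ℝ) ^ 4 ≤
    (∑ x : Fin n, ∑ y : Fin n, QR.F Q x y ^ 2) / (n:ℝ) ^ 4 -
    (1 / 2) * ((1 - (n:ℝ)⁻¹) ^ 2 - (2 / 3) * (1 - (n:ℝ)⁻¹) ^ 2 * (1 + (n:ℝ)⁻¹) +
      2 * ((∑ i : Fin n, QR.F Q i (Q i) * i * (Q i)) / (n:ℝ) ^ 4) -
      (n * ∑ i : Fin n, QR.F Q i (Q i) ^ 2) / (n:ℝ) ^ 4) +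
    ((1 - (n:ℝ)⁻¹) * (2 - (n:ℝ)⁻¹) / 6) ^ 2 := by
  have hn' : (0:ℝ) < n := by exact_mod_cast hn
  set c := ∑ x : Fin n, ∑ y : Fin n, QR.F Q x y ^ 2 with hc
  set b := ∑ i : Fin n, QR.F Q i (Q i) * i * (Q i) with hb
  set a := ∑ i : Fin n, QR.F Q i (Q i) ^ 2 with ha
  set d := ∑ i : Fin n, ((i:ℕ):ℝ) ^ 2 * ((Q i : ℕ):ℝ) ^ 2 with hd
  have h1 : 0 ≤ a - 2 * b / n + d / n ^ 2 := by
    have : 0 ≤ ∑ i : Fin n, (QR.F Q i (Q i) - i * (Q i) / n) ^ 2 :=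
      Finset.sum_nonneg fun i _ => sq_nonneg _
    refine this.trans_eq ?_
    rw [ha, hb, hd, mul_div_assoc, Finset.sum_div, Finset.sum_div, Finset.mul_sum,
      ← Finset.sum_sub_distrib, ← Finset.sum_add_distrib]
    refine Finset.sum_congr rfl fun i _ => ?_
    field_simp
    ring
  have h2 : ∑ x : Fin n, ∑ y : Fin n, QR.D Q x y ^ 2 = c - 2 / n * (∑ x : Fin n, ∑ y : Fin n, QR.F Q x y * (x * y))
      + (((n:ℝ) - 1) * n * (2 * n - 1) / 6) ^ 2 / n ^ 2 := by
    rw [← QR.sum_sq1, sq (∑ x : Fin n, ((x:ℕ):ℝ) ^ 2), Finset.sum_mul_sum, hc, Finset.mul_sum, Finset.sum_div,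
      ← Finset.sum_sub_distrib, ← Finset.sum_add_distrib]
    refine Finset.sum_congr rfl fun x _ => ?_
    rw [Finset.mul_sum, Finset.sum_div,
      ← Finset.sum_sub_distrib, ← Finset.sum_add_distrib]
    refine Finset.sum_congr rfl fun y _ => ?_
    rw [QR.D]
    field_simp
    ring
  have h3 : (1 / 4) * (n * ((n:ℝ)^2 - n)^2 - 2 * ((n:ℝ)^2 - n) * (((n:ℝ) - 1) * n * (n + 1) / 3) + d) ≤
      ∑ x : Fin n, ∑ y : Fin n, QR.F Q x y * (x * y) := by
    rw [QR.sum_Fxy]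
    have e1 := QR.sum_sq2 n
    have e2 : ∑ x : Fin n, (((Q x:ℕ):ℝ) ^ 2 + (Q x : ℕ)) = ((n:ℝ) - 1) * n * (n + 1) / 3 := by
      rw [Equiv.sum_comp Q (fun x => (((x:ℕ):ℝ) ^ 2 + (x : ℕ))), e1]
    have e3 : (1 / 4) * (n * ((n:ℝ)^2 - n)^2 - 2 * ((n:ℝ)^2 - n) * (((n:ℝ) - 1) * n * (n + 1) / 3) + d) =
        ∑ j : Fin n, (1 / 4) * (((n:ℝ)^2 - n)^2 - ((n:ℝ)^2 - n) * (((j:ℕ):ℝ) ^ 2 + (j : ℕ))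
          - ((n:ℝ)^2 - n) * (((Q j:ℕ):ℝ) ^ 2 + (Q j : ℕ)) + ((j:ℕ):ℝ) ^ 2 * ((Q j : ℕ):ℝ) ^ 2) := by
      rw [← Finset.mul_sum, Finset.sum_add_distrib, Finset.sum_sub_distrib, Finset.sum_sub_distrib,
        ← Finset.mul_sum, ← Finset.mul_sum, e1, e2, ← hd]
      simp
      ring
    rw [e3]
    refine Finset.sum_le_sum fun j _ => ?_
    have p1 : (0:ℝ) ≤ ((j:ℕ):ℝ) := Nat.cast_nonneg _
    have p2 : (0:ℝ) ≤ ((Q j:ℕ):ℝ) := Nat.cast_nonneg _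
    have := mul_nonneg p1 p2
    have := mul_nonneg (mul_nonneg p1 p2) p1
    have := mul_nonneg (mul_nonneg p1 p2) p2
    nlinarith
  have h4 : 2 * n * b - n ^ 2 * a ≤ d := by
    have := mul_nonneg h1 (by positivity : (0:ℝ) ≤ n ^ 2)
    have e : (a - 2 * b / n + d / n ^ 2) * (n:ℝ) ^ 2 = n ^ 2 * a - 2 * n * b + d := by
      field_simp
    linarith
  have h5 : (1 / 4) * (n * ((n:ℝ)^2 - n)^2 - 2 * ((n:ℝ)^2 - n) * (((n:ℝ) - 1) * n * (n + 1) / 3) + (2 * n * b - n ^ 2 * a)) ≤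
      ∑ x : Fin n, ∑ y : Fin n, QR.F Q x y * (x * y) := by linarith
  rw [h2, div_le_iff₀ (by positivity)]
  have h6 := mul_le_mul_of_nonneg_left h5 (by positivity : (0:ℝ) ≤ 2 / n)
  refine (add_le_add_left (sub_le_sub_left h6 c) _).trans_eq ?_
  field_simp
  ring

theorem QR.L2_lim (P : ℕ → (n : ℕ) × Equiv.Perm (Fin n))
    (H : ∀ π : Equiv.Perm (Fin 4),
        Tendsto (fun i => PatternDensity π (P i).2) atTop (nhds (1 / 24 : ℝ))) :
    Tendsto (fun i => (∑ x : Fin (P i).1, ∑ y : Fin (P i).1, QR.D (P i).2 x y ^ 2) / ((P i).1:ℝ) ^ 4)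
      atTop (nhds 0) := by
  have hn := QR.order_atTop P H
  have b1 : ∀ p q r u, |QR.bl p q r u| ≤ 1 := by
    intro p q r u; unfold QR.bl; split_ifs <;> simp
  have Lc := QR.fullLim P H _ _ (QR.bl_inv 0 1 2) (QR.bl_inv 0 1 3) (b1 _ _ _) (b1 _ _ _) QR.bl_sum1 QR.bl_sum2
  have La := QR.fullLim P H _ _ (QR.bl_inv 1 2 0) (QR.bl_inv 1 2 0) (b1 _ _ _) (b1 _ _ _) QR.bl_sum3 QR.bl_sum3
  have Lb := QR.fullLim P H _ _ (QR.bl_inv 1 2 0) (QR.bl_inv 1 3 0) (b1 _ _ _) (b1 _ _ _) QR.bl_sum3 QR.bl_sum4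
  simp only [QR.sum_c] at Lc
  simp only [QR.sum_a] at La
  simp only [QR.sum_b] at Lb
  have Ln : Tendsto (fun i => ((P i).1 : ℝ)⁻¹) atTop (nhds 0) :=
    tendsto_inv_atTop_zero.comp (tendsto_natCast_atTop_atTop.comp hn)
  have U := ((Lc.sub (((((Ln.const_sub 1).pow 2).sub (((((Ln.const_sub 1).pow 2).const_mul (2/3))).mul
    (Ln.const_add 1))).add (Lb.const_mul 2)).sub La |>.const_mul (1/2)))).add
    ((((Ln.const_sub 1).mul (Ln.const_sub 2)).div_const 6).pow 2)
  norm_num at U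
  refine squeeze_zero' ?_ ?_ U
  · filter_upwards with i
    exact div_nonneg (Finset.sum_nonneg fun _ _ => Finset.sum_nonneg fun _ _ => sq_nonneg _) (by positivity)
  · filter_upwards [hn.eventually (eventually_gt_atTop 0)] with i hi
    have := QR.L2_bound hi (P i).2
    refine this.trans_eq ?_
    norm_num

theorem QR.sum_lt' {n : ℕ} (m : ℕ) (hm : m ≤ n) : ∑ j : Fin n, QR.lt1 j m = m := by
  unfold QR.lt1
  rw [Fin.sum_univ_eq_sum_range (fun j => if j < m then (1:ℝ) else 0), Finset.sum_boole]
  congr 1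
  have : (Finset.range n).filter (fun j => j < m) = Finset.range m := by
    ext j; simp; omega
  rw [this, Finset.card_range]

theorem QR.lt1_nonneg (x y : ℕ) : 0 ≤ QR.lt1 x y := by
  unfold QR.lt1; split_ifs <;> simp

theorem QR.lt1_le (x y : ℕ) : QR.lt1 x y ≤ 1 := by
  unfold QR.lt1; split_ifs <;> simp

theorem QR.lt1_mono (j : ℕ) {x y : ℕ} (h : x ≤ y) : QR.lt1 j x ≤ QR.lt1 j y := by
  unfold QR.lt1; split_ifs <;> first | omega | simp

theorem QR.F_lip1 {n : ℕ} (Q : Equiv.Perm (Fin n)) {x x' : ℕ} (y : ℕ) (h : x ≤ x') (hn : x' ≤ n) :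
    0 ≤ QR.F Q x' y - QR.F Q x y ∧ QR.F Q x' y - QR.F Q x y ≤ (x':ℝ) - x := by
  rw [QR.F_eq, QR.F_eq, ← Finset.sum_sub_distrib, ← QR.sum_lt' x' hn, ← QR.sum_lt' x (h.trans hn),
    ← Finset.sum_sub_distrib]
  constructor
  · refine Finset.sum_nonneg fun j _ => ?_
    rw [← sub_mul]
    exact mul_nonneg (sub_nonneg.2 (QR.lt1_mono _ h)) (QR.lt1_nonneg _ _)
  · refine Finset.sum_le_sum fun j _ => ?_
    rw [← sub_mul]
    exact mul_le_of_le_one_right (sub_nonneg.2 (QR.lt1_mono _ h)) (QR.lt1_le _ _)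

theorem QR.F_symm {n : ℕ} (Q : Equiv.Perm (Fin n)) (x y : ℕ) : QR.F Q x y = QR.F Q.symm y x := by
  rw [QR.F_eq, QR.F_eq, ← Equiv.sum_comp Q (fun j => QR.lt1 j y * QR.lt1 (Q.symm j) x)]
  refine Finset.sum_congr rfl fun j _ => ?_
  rw [Equiv.symm_apply_apply, mul_comm]

theorem QR.D_symm {n : ℕ} (Q : Equiv.Perm (Fin n)) (x y : ℕ) : QR.D Q x y = QR.D Q.symm y x := by
  unfold QR.D; rw [QR.F_symm]; ring

theorem QR.D_lip1 {n : ℕ} (Q : Equiv.Perm (Fin n)) {x x' : ℕ} (y : ℕ) (h : x ≤ x') (hn : x' ≤ n)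
    (hy : y ≤ n) : |QR.D Q x' y - QR.D Q x y| ≤ (x':ℝ) - x := by
  obtain ⟨h1, h2⟩ := QR.F_lip1 Q y h hn
  have hx : (0:ℝ) ≤ (x':ℝ) - x := sub_nonneg.2 (by exact_mod_cast h)
  have e : QR.D Q x' y - QR.D Q x y = (QR.F Q x' y - QR.F Q x y) - ((x':ℝ) - x) * ((y:ℝ) / n) := by
    unfold QR.D; ring
  have c1 : (0:ℝ) ≤ (y:ℝ)/n := by positivity
  have c2 : (y:ℝ)/n ≤ 1 := div_le_one_of_le₀ (by exact_mod_cast hy) (by positivity)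
  have d1 := mul_nonneg hx c1
  have d2 := mul_le_of_le_one_right hx c2
  rw [e, abs_le]; constructor <;> linarith

theorem QR.D_lip1' {n : ℕ} (Q : Equiv.Perm (Fin n)) {x x' : ℕ} (y : ℕ) (hx : x ≤ n) (hn : x' ≤ n)
    (hy : y ≤ n) : |QR.D Q x' y - QR.D Q x y| ≤ |(x':ℝ) - x| := by
  rcases le_total x x' with h | h
  · exact (QR.D_lip1 Q y h hn hy).trans (le_abs_self _)
  · rw [abs_sub_comm, abs_sub_comm (x':ℝ)]
    exact (QR.D_lip1 Q y h hx hy).trans (le_abs_self _)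

theorem QR.D_lip {n : ℕ} (Q : Equiv.Perm (Fin n)) {x x' y y' : ℕ} (hx : x ≤ n) (hx' : x' ≤ n)
    (hy : y ≤ n) (hy' : y' ≤ n) :
    |QR.D Q x' y' - QR.D Q x y| ≤ |(x':ℝ) - x| + |(y':ℝ) - y| := by
  have h1 := QR.D_lip1' Q y' hx hx' hy'
  have h2 := QR.D_lip1' Q.symm x hy hy' hx
  rw [← QR.D_symm, ← QR.D_symm] at h2
  have := abs_sub_le (QR.D Q x' y') (QR.D Q x y') (QR.D Q x y)
  linarith

theorem QR.win (n r x0 : ℕ) (h : 2 * r ≤ n) (hx : x0 ≤ n) :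
    ∃ a, a + r ≤ n ∧ ∀ x ∈ Finset.Ico a (a + r), |(x:ℝ) - x0| ≤ r := by
  by_cases c : x0 + r ≤ n
  · refine ⟨x0, c, fun x hx => ?_⟩
    rw [Finset.mem_Ico] at hx
    have h1 : (x0:ℝ) ≤ x := by exact_mod_cast hx.1
    have h2 : (x:ℝ) ≤ x0 + r := by exact_mod_cast hx.2.le
    rw [abs_le]; constructor <;> linarith [(Nat.cast_nonneg r : (0:ℝ) ≤ r)]
  · refine ⟨x0 - r, by omega, fun x hx => ?_⟩
    rw [Finset.mem_Ico] at hx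
    have h1 : (x0:ℝ) ≤ x + r := by exact_mod_cast (by omega : x0 ≤ x + r)
    have h2 : (x:ℝ) ≤ x0 := by exact_mod_cast (by omega : x ≤ x0)
    rw [abs_le]; constructor <;> linarith [(Nat.cast_nonneg r : (0:ℝ) ≤ r)]

theorem QR.box {n : ℕ} (Q : Equiv.Perm (Fin n)) {x0 y0 r : ℕ} (h : 2 * r ≤ n) (hx : x0 ≤ n)
    (hy : y0 ≤ n) (c : ℝ) (hc : 2 * (r:ℝ) ≤ c) (hD : c ≤ |QR.D Q x0 y0|) :
    (r:ℝ)^2 * (c - 2 * r)^2 ≤ ∑ x : Fin n, ∑ y : Fin n, QR.D Q x y ^ 2 := by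
  obtain ⟨a, ha, ha'⟩ := QR.win n r x0 h hx
  obtain ⟨b, hb, hb'⟩ := QR.win n r y0 h hy
  have e : ∑ x : Fin n, ∑ y : Fin n, QR.D Q x y ^ 2
      = ∑ x ∈ Finset.range n, ∑ y ∈ Finset.range n, QR.D Q x y ^ 2 := by
    rw [← Fin.sum_univ_eq_sum_range (fun x => ∑ y ∈ Finset.range n, QR.D Q x y ^ 2)]
    refine Finset.sum_congr rfl fun x _ => ?_
    rw [← Fin.sum_univ_eq_sum_range (fun y => QR.D Q x y ^ 2)]
  have sa : Finset.Ico a (a + r) ⊆ Finset.range n := by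
    intro x hx; rw [Finset.mem_Ico] at hx; rw [Finset.mem_range]; omega
  have sb : Finset.Ico b (b + r) ⊆ Finset.range n := by
    intro x hx; rw [Finset.mem_Ico] at hx; rw [Finset.mem_range]; omega
  rw [e]
  calc (r:ℝ)^2 * (c - 2 * r)^2
      = ∑ x ∈ Finset.Ico a (a + r), ∑ y ∈ Finset.Ico b (b + r), (c - 2 * r)^2 := by
        simp; ring
    _ ≤ ∑ x ∈ Finset.Ico a (a + r), ∑ y ∈ Finset.Ico b (b + r), QR.D Q x y ^ 2 := by
        refine Finset.sum_le_sum fun x hx1 => Finset.sum_le_sum fun y hy1 => ?_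
        have hxn : x ≤ n := (Finset.mem_range.1 (sa hx1)).le
        have hyn : y ≤ n := (Finset.mem_range.1 (sb hy1)).le
        have h1 := QR.D_lip Q hx hxn hy hyn
        have h2 := ha' x hx1
        have h3 := hb' y hy1
        have h4 := abs_sub_abs_le_abs_sub (QR.D Q x0 y0) (QR.D Q x y)
        rw [abs_sub_comm] at h4
        rw [← sq_abs (QR.D Q x y)]
        exact pow_le_pow_left₀ (by linarith) (by linarith) 2
    _ ≤ ∑ x ∈ Finset.Ico a (a + r), ∑ y ∈ Finset.range n, QR.D Q x y ^ 2 :=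
        Finset.sum_le_sum fun x _ => Finset.sum_le_sum_of_subset_of_nonneg sb fun _ _ _ => sq_nonneg _
    _ ≤ _ := Finset.sum_le_sum_of_subset_of_nonneg sa fun _ _ _ => Finset.sum_nonneg fun _ _ => sq_nonneg _

theorem QR.sup_bound {n : ℕ} (Q : Equiv.Perm (Fin n)) {x0 y0 : ℕ} (hx : x0 ≤ n)
    (hy : y0 ≤ n) (δ : ℝ) (h0 : 0 < δ) (h1 : δ ≤ 1) (hn : 8 / δ ≤ n)
    (hS : (∑ x : Fin n, ∑ y : Fin n, QR.D Q x y ^ 2) / (n:ℝ)^4 < δ^4/256) :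
    |QR.D Q x0 y0| ≤ δ * n := by
  by_contra hcon
  push Not at hcon
  have hn' : 8 ≤ δ * n := by rw [div_le_iff₀ h0] at hn; linarith
  have hn0 : (0:ℝ) < n := by
    by_contra hh
    have := mul_nonpos_of_nonneg_of_nonpos h0.le (not_lt.1 hh)
    linarith
  set r := ⌊δ * n / 4⌋₊ with hr
  have r1 : (r:ℝ) ≤ δ * n / 4 := Nat.floor_le (by positivity)
  have r2 : δ * n / 4 < r + 1 := Nat.lt_floor_add_one _
  have r3 : δ * n / 8 ≤ r := by linarith
  have r4 : 2 * r ≤ n := by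
    have : (2:ℝ) * r ≤ n := by nlinarith
    exact_mod_cast this
  have B := QR.box Q r4 hx hy (δ * n) (by linarith) hcon.le
  rw [div_lt_iff₀ (by positivity)] at hS
  have q1 : (δ * n / 8)^2 ≤ (r:ℝ)^2 := pow_le_pow_left₀ (by positivity) r3 2
  have q2 : (δ * n / 2)^2 ≤ (δ * n - 2 * r)^2 := pow_le_pow_left₀ (by positivity) (by linarith) 2
  have q3 := mul_le_mul q1 q2 (by positivity) (by positivity)
  have : (δ * n / 8)^2 * (δ * n / 2)^2 = δ^4/256 * (n:ℝ)^4 := by ring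
  linarith

theorem QR.sup_lim (P : ℕ → (n : ℕ) × Equiv.Perm (Fin n))
    (H : ∀ π : Equiv.Perm (Fin 4),
        Tendsto (fun i => PatternDensity π (P i).2) atTop (nhds (1 / 24 : ℝ)))
    (δ : ℝ) (h0 : 0 < δ) (h1 : δ ≤ 1) :
    ∀ᶠ i in atTop, ∀ x y : ℕ, x ≤ (P i).1 → y ≤ (P i).1 → |QR.D (P i).2 x y| ≤ δ * (P i).1 := by
  have hn := tendsto_natCast_atTop_atTop (R := ℝ) |>.comp (QR.order_atTop P H)
  filter_upwards [hn.eventually (eventually_ge_atTop (8/δ)),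
    (QR.L2_lim P H).eventually (gt_mem_nhds (show 0 < δ^4/256 by positivity))] with i a b x y hx hy
  exact QR.sup_bound _ hx hy δ h0 h1 a b

open scoped Classical in
/-- Indicator of a proposition. -/
noncomputable def QR.ind (p : Prop) : ℝ := if p then 1 else 0

theorem QR.interval {n : ℕ} (S : Set (Fin n)) (hS : S.OrdConnected) :
    ∃ x1 x2 : ℕ, x1 ≤ n ∧ x2 ≤ n ∧ ∀ x : Fin n, QR.ind (x ∈ S) = QR.lt1 x x2 - QR.lt1 x x1 := by
  classical
  by_cases hne : S.Nonempty
  · obtain ⟨p, hp, hp'⟩ := S.toFinite.exists_minimal hne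
    obtain ⟨q, hq, hq'⟩ := S.toFinite.exists_maximal hne
    refine ⟨p, q + 1, p.2.le, q.2, fun x => ?_⟩
    have hx : x ∈ S ↔ p ≤ x ∧ x ≤ q := by
      constructor
      · intro hx
        exact ⟨(le_total p x).elim id (hp' hx), (le_total x q).elim id (hq' hx)⟩
      · intro h; exact hS.out hp hq h
    have hpq : p ≤ q := (le_total p q).elim id (hp' hq)
    unfold QR.ind QR.lt1
    simp only [hx, Fin.le_def] at *
    split_ifs <;> first | omega | simp
  · refine ⟨0, 0, by omega, by omega, fun x => ?_⟩
    have : x ∉ S := fun h => hne ⟨x, h⟩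
    simp [QR.ind, this]

theorem QR.rect {n : ℕ} (hn : 0 < n) (Q : Equiv.Perm (Fin n)) (δ : ℝ)
    (hD : ∀ x y : ℕ, x ≤ n → y ≤ n → |QR.D Q x y| ≤ δ * n) (A B : Set (Fin n))
    (hA : A.OrdConnected) (hB : B.OrdConnected) :
    |∑ x : Fin n, ∑ y : Fin n, (QR.ind (x ∈ A) * QR.ind (Q x ∈ B) - QR.ind (x ∈ A) * QR.ind (y ∈ B))|
      ≤ 4 * δ * (n:ℝ)^2 := by
  obtain ⟨x1, x2, hx1, hx2, hA⟩ := QR.interval A hA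
  obtain ⟨y1, y2, hy1, hy2, hB⟩ := QR.interval B hB
  have hn' : (0:ℝ) < n := by exact_mod_cast hn
  have e : ∑ x : Fin n, ∑ y : Fin n, (QR.ind (x ∈ A) * QR.ind (Q x ∈ B) - QR.ind (x ∈ A) * QR.ind (y ∈ B))
      = n * (QR.D Q x2 y2 - QR.D Q x1 y2 - QR.D Q x2 y1 + QR.D Q x1 y1) := by
    have e1 : ∑ x : Fin n, QR.ind (x ∈ A) * QR.ind (Q x ∈ B)
        = QR.F Q x2 y2 - QR.F Q x1 y2 - QR.F Q x2 y1 + QR.F Q x1 y1 := by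
      simp only [QR.F_eq, ← Finset.sum_sub_distrib, ← Finset.sum_add_distrib, hA, hB]
      refine Finset.sum_congr rfl fun x _ => by ring
    have e2 : ∑ x : Fin n, QR.ind (x ∈ A) = (x2:ℝ) - x1 := by
      simp only [hA, Finset.sum_sub_distrib, QR.sum_lt' _ hx1, QR.sum_lt' _ hx2]
    have e3 : ∑ x : Fin n, QR.ind (x ∈ B) = (y2:ℝ) - y1 := by
      simp only [hB, Finset.sum_sub_distrib, QR.sum_lt' _ hy1, QR.sum_lt' _ hy2]
    simp only [Finset.sum_sub_distrib, Finset.sum_const, Finset.card_univ, Fintype.card_fin, nsmul_eq_mul]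
    rw [← Finset.mul_sum, e1]
    simp only [← Finset.mul_sum, ← Finset.sum_mul, e2, e3]
    unfold QR.D
    field_simp
    ring
  rw [e, abs_mul, abs_of_pos hn']
  have a1 := abs_le.1 (hD x2 y2 hx2 hy2)
  have a2 := abs_le.1 (hD x1 y2 hx1 hy2)
  have a3 := abs_le.1 (hD x2 y1 hx2 hy1)
  have a4 := abs_le.1 (hD x1 y1 hx1 hy1)
  have : |QR.D Q x2 y2 - QR.D Q x1 y2 - QR.D Q x2 y1 + QR.D Q x1 y1| ≤ 4 * (δ * n) := by
    rw [abs_le]; constructor <;> linarith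
  nlinarith

/-- `v` is ordered as the pattern `π`. -/
def QR.Pat {k n : ℕ} (π : Equiv.Perm (Fin k)) (v : Fin k → Fin n) : Prop :=
  ∀ i j, v i < v j ↔ π i < π j

theorem QR.pat_one {k n : ℕ} (a : Fin k → Fin n) : StrictMono a ↔ QR.Pat 1 a := by
  constructor
  · intro h i j; simpa using h.lt_iff_lt
  · intro h i j hij; exact (h i j).2 (by simpa using hij)

theorem QR.pat_conn {k n : ℕ} (π : Equiv.Perm (Fin k)) (v : Fin k → Fin n) (m : Fin k) :
    {x | QR.Pat π (Function.update v m x)}.OrdConnected := by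
  constructor
  intro x hx y hy z hz i j
  have h1 := hx i j
  have h2 := hy i j
  obtain ⟨z1, z2⟩ := hz
  by_cases hi : i = m <;> by_cases hj : j = m
  · subst hi; subst hj; simp
  · subst hi
    simp only [Function.update_self, Function.update_of_ne hj] at *
    exact ⟨fun h => h1.1 (z1.trans_lt h), fun h => z2.trans_lt (h2.2 h)⟩
  · subst hj
    simp only [Function.update_self, Function.update_of_ne hi] at *
    exact ⟨fun h => h2.1 (h.trans_le z2), fun h => (h1.2 h).trans_le z1⟩
  · simp only [Function.update_of_ne hi, Function.update_of_ne hj] at *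
    exact h1

theorem QR.avg {k n : ℕ} (m : Fin k) (Φ : (Fin k → Fin n) → ℝ) :
    (n:ℝ) * ∑ a, Φ a = ∑ a, ∑ x, Φ (Function.update a m x) := by
  let e : ((Fin k → Fin n) × Fin n) → ((Fin k → Fin n) × Fin n) := fun p =>
    (Function.update p.1 m p.2, p.1 m)
  have he : Function.Involutive e := by
    intro p; simp [e]
  have := Equiv.sum_comp he.toPerm (fun p => Φ p.1)
  rw [Fintype.sum_prod_type, Fintype.sum_prod_type] at this
  simp only [Function.Involutive.coe_toPerm, e] at this
  rw [this]
  simp [Finset.mul_sum]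

/-- Hybrid of the values `Q ∘ a` and the independent values `b`. -/
def QR.hyb {k n : ℕ} (Q : Equiv.Perm (Fin n)) (m : ℕ) (a b : Fin k → Fin n) : Fin k → Fin n :=
  fun j => if j.val < m then b j else Q (a j)

/-- Hybrid sums. -/
noncomputable def QR.HS {k n : ℕ} (π : Equiv.Perm (Fin k)) (Q : Equiv.Perm (Fin n)) (m : ℕ) : ℝ :=
  ∑ a : Fin k → Fin n, ∑ b : Fin k → Fin n, QR.ind (StrictMono a) * QR.ind (QR.Pat π (QR.hyb Q m a b))

theorem QR.hyb_upd {k n : ℕ} (Q : Equiv.Perm (Fin n)) (m : Fin k) (a b : Fin k → Fin n) (x y : Fin n) :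
    QR.hyb Q m (Function.update a m x) (Function.update b m y) =
      Function.update (QR.hyb Q m a b) m (Q x) := by
  funext j
  by_cases h : j = m
  · subst h; simp [QR.hyb]
  · simp [QR.hyb, Function.update_of_ne h]

theorem QR.hyb_upd' {k n : ℕ} (Q : Equiv.Perm (Fin n)) (m : Fin k) (a b : Fin k → Fin n) (x y : Fin n) :
    QR.hyb Q (m + 1) (Function.update a m x) (Function.update b m y) =
      Function.update (QR.hyb Q m a b) m y := by
  funext j
  by_cases h : j = m
  · subst h; simp [QR.hyb]
  · have h' : j.val ≠ m.val := fun e => h (Fin.ext e)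
    have : j.val < m.val + 1 ↔ j.val < m.val := by omega
    simp only [QR.hyb, Function.update_of_ne h, this]

theorem QR.avg2 {k n : ℕ} (m : Fin k) (Φ : (Fin k → Fin n) → (Fin k → Fin n) → ℝ) :
    (n:ℝ)^2 * ∑ a, ∑ b, Φ a b =
      ∑ a, ∑ b, ∑ x, ∑ y, Φ (Function.update a m x) (Function.update b m y) := by
  rw [sq, mul_assoc, QR.avg m (fun a => ∑ b, Φ a b), Finset.mul_sum]
  refine Finset.sum_congr rfl fun a _ => ?_
  rw [Finset.mul_sum, Finset.sum_comm]
  refine Finset.sum_congr rfl fun x _ => ?_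
  exact QR.avg m _

theorem QR.step {k n : ℕ} (hn : 0 < n) (π : Equiv.Perm (Fin k)) (Q : Equiv.Perm (Fin n)) (δ : ℝ)
    (hD : ∀ x y : ℕ, x ≤ n → y ≤ n → |QR.D Q x y| ≤ δ * n) (m : Fin k) :
    |QR.HS π Q m - QR.HS π Q (m + 1)| ≤ 4 * δ * (n:ℝ)^(2*k) := by
  have hn' : (0:ℝ) < n := by exact_mod_cast hn
  have e : (n:ℝ)^2 * (QR.HS π Q m - QR.HS π Q (m + 1)) =
      ∑ a : Fin k → Fin n, ∑ b : Fin k → Fin n, ∑ x : Fin n, ∑ y : Fin n,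
        (QR.ind (x ∈ {x | QR.Pat 1 (Function.update a m x)}) *
            QR.ind (Q x ∈ {y | QR.Pat π (Function.update (QR.hyb Q m a b) m y)}) -
          QR.ind (x ∈ {x | QR.Pat 1 (Function.update a m x)}) *
            QR.ind (y ∈ {y | QR.Pat π (Function.update (QR.hyb Q m a b) m y)})) := by
    rw [mul_sub]
    unfold QR.HS
    rw [QR.avg2 m, QR.avg2 m]
    simp only [← Finset.sum_sub_distrib, QR.hyb_upd, QR.hyb_upd', QR.pat_one, Set.mem_ofPred_eq]
  have b : (n:ℝ)^2 * |QR.HS π Q m - QR.HS π Q (m + 1)| ≤ (n:ℝ)^2 * (4 * δ * (n:ℝ)^(2*k)) := by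
    rw [← abs_of_pos (pow_pos hn' 2), ← abs_mul, e, abs_of_pos (pow_pos hn' 2)]
    calc _ ≤ ∑ a : Fin k → Fin n, ∑ b : Fin k → Fin n, (4 * δ * (n:ℝ)^2) := by
          refine (Finset.abs_sum_le_sum_abs _ _).trans (Finset.sum_le_sum fun a _ => ?_)
          refine (Finset.abs_sum_le_sum_abs _ _).trans (Finset.sum_le_sum fun b _ => ?_)
          exact QR.rect hn Q δ hD _ _ (QR.pat_conn _ _ _) (QR.pat_conn _ _ _)
      _ = _ := by
          simp
          ring
  exact le_of_mul_le_mul_left b (by positivity)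

theorem QR.steps {k n : ℕ} (hn : 0 < n) (π : Equiv.Perm (Fin k)) (Q : Equiv.Perm (Fin n)) (δ : ℝ)
    (hD : ∀ x y : ℕ, x ≤ n → y ≤ n → |QR.D Q x y| ≤ δ * n) (m : ℕ) (hm : m ≤ k) :
    |QR.HS π Q 0 - QR.HS π Q m| ≤ m * (4 * δ * (n:ℝ)^(2*k)) := by
  induction m with
  | zero => simp
  | succ m ih =>
    have h1 := ih (by omega)
    have h2 := QR.step hn π Q δ hD ⟨m, hm⟩
    have h3 := abs_sub_le (QR.HS π Q 0) (QR.HS π Q m) (QR.HS π Q (m+1))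
    push_cast
    simp only at h2
    linarith

theorem QR.sum_mono (k n : ℕ) : ∑ a : Fin k → Fin n, QR.ind (StrictMono a) = (n.choose k : ℕ) := by
  have h := QR.cnt_eq_sum (1 : Equiv.Perm (Fin k)) (1 : Equiv.Perm (Fin n))
  have h2 : QR.cnt (1 : Equiv.Perm (Fin k)) (1 : Equiv.Perm (Fin n)) = n.choose k := by
    unfold QR.cnt
    have : n.choose k = (Finset.powersetCard k (Finset.univ : Finset (Fin n))).card := by simp
    rw [this]
    congr 1
    ext A
    simp [Finset.mem_powersetCard]
  rw [h2] at h
  rw [h]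
  refine Finset.sum_congr rfl fun a _ => ?_
  unfold QR.ind
  by_cases c : StrictMono a
  · simp [c, c.lt_iff_lt]
  · simp [c]

theorem QR.sum_pat {k n : ℕ} (π : Equiv.Perm (Fin k)) :
    ∑ a : Fin k → Fin n, QR.ind (QR.Pat π a) = (n.choose k : ℕ) := by
  rw [← QR.sum_mono, ← Equiv.sum_comp (π.arrowCongr (Equiv.refl (Fin n))) (fun a => QR.ind (StrictMono a))]
  refine Finset.sum_congr rfl fun a _ => ?_
  congr 1
  rw [QR.pat_one]
  refine propext ⟨fun h i j => ?_, fun h i j => ?_⟩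
  · simpa using h (π.symm i) (π.symm j)
  · simpa using h (π i) (π j)

theorem QR.HS_zero {k n : ℕ} (π : Equiv.Perm (Fin k)) (Q : Equiv.Perm (Fin n)) :
    QR.HS π Q 0 = (n:ℝ)^k * QR.cnt π Q := by
  rw [QR.cnt_eq_sum]
  unfold QR.HS
  rw [Finset.mul_sum]
  refine Finset.sum_congr rfl fun a _ => ?_
  simp [QR.hyb, QR.ind, QR.Pat]

theorem QR.HS_top {k n : ℕ} (π : Equiv.Perm (Fin k)) (Q : Equiv.Perm (Fin n)) :
    QR.HS π Q k = ((n.choose k : ℕ):ℝ)^2 := by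
  have : ∀ a b : Fin k → Fin n, QR.hyb Q k a b = b := by
    intro a b; funext j; simp [QR.hyb]
  unfold QR.HS
  simp only [this, ← Finset.mul_sum, ← Finset.sum_mul, QR.sum_mono, QR.sum_pat]
  ring

theorem QR.cnt_close {k n : ℕ} (hn : 0 < n) (π : Equiv.Perm (Fin k)) (Q : Equiv.Perm (Fin n)) (δ : ℝ)
    (hD : ∀ x y : ℕ, x ≤ n → y ≤ n → |QR.D Q x y| ≤ δ * n) :
    |(QR.cnt π Q : ℝ) / (n:ℝ)^k - (((n.choose k : ℕ):ℝ) / (n:ℝ)^k)^2| ≤ 4 * k * δ := by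
  have hn' : (0:ℝ) < n := by exact_mod_cast hn
  have h := QR.steps hn π Q δ hD k le_rfl
  rw [QR.HS_zero, QR.HS_top] at h
  have e : (QR.cnt π Q : ℝ) / (n:ℝ)^k - (((n.choose k : ℕ):ℝ) / (n:ℝ)^k)^2
      = ((n:ℝ)^k * QR.cnt π Q - ((n.choose k : ℕ):ℝ)^2) / (n:ℝ)^(2*k) := by
    rw [two_mul, pow_add]
    field_simp
  rw [e, abs_div, abs_of_pos (pow_pos hn' _), div_le_iff₀ (pow_pos hn' _)]
  linarith

theorem QR.cnt_lim (P : ℕ → (n : ℕ) × Equiv.Perm (Fin n))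
    (H : ∀ π : Equiv.Perm (Fin 4),
        Tendsto (fun i => PatternDensity π (P i).2) atTop (nhds (1 / 24 : ℝ)))
    {k : ℕ} (π : Equiv.Perm (Fin k)) :
    Tendsto (fun i => (QR.cnt π (P i).2 : ℝ) / ((P i).1:ℝ)^k -
      ((((P i).1.choose k : ℕ):ℝ) / ((P i).1:ℝ)^k)^2) atTop (nhds 0) := by
  rw [Metric.tendsto_nhds]
  intro ε hε
  have hk : (0:ℝ) < 4 * k + 1 := by positivity
  have hδ : 0 < min 1 (ε / (4 * k + 1)) := lt_min one_pos (by positivity)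
  filter_upwards [QR.sup_lim P H _ hδ (min_le_left _ _),
    (QR.order_atTop P H).eventually (eventually_gt_atTop 0)] with i hi hn
  rw [Real.dist_eq, sub_zero]
  refine (QR.cnt_close hn π _ _ hi).trans_lt ?_
  have h1 : min 1 (ε / (4 * k + 1)) ≤ ε / (4 * k + 1) := min_le_right _ _
  rw [le_div_iff₀ hk] at h1
  linarith

theorem statement_0 (P : ℕ → (n : ℕ) × Equiv.Perm (Fin n)) :
    Quasirandom P ↔
      ∀ π : Equiv.Perm (Fin 4),
        Tendsto (fun i => PatternDensity π (P i).2) atTop (nhds (1 / 24 : ℝ)) := by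
  constructor
  · intro h π
    have := h 4 π
    norm_num [Nat.factorial] at this ⊢
    exact this
  · intro H k π
    have hC := (QR.choose_lim k).comp (QR.order_atTop P H)
    have hf : (k.factorial : ℝ) ≠ 0 := by exact_mod_cast k.factorial_ne_zero
    have h1 := (QR.cnt_lim P H π).add (hC.pow 2)
    have h2 := h1.div hC (by positivity)
    have e : (0 + (1 / (k.factorial:ℝ))^2) / (1 / (k.factorial:ℝ)) = 1 / (k.factorial:ℝ) := by
      field_simp
      simp
    rw [e] at h2
    refine h2.congr' ?_
    filter_upwards [(QR.order_atTop P H).eventually (eventually_gt_atTop 0)] with i hn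
    have hn' : ((P i).1:ℝ) ≠ 0 := by exact_mod_cast hn.ne'
    rw [QR.density_eq]
    simp only [Function.comp, sub_add_cancel, Pi.div_apply]
    rw [div_div_div_cancel_right₀ (pow_ne_zero _ hn')]
end

section
/- Let μ be a permuton. If μ([min{x_1,x_2},max{x_1,x_2}]×[min{y_1,y_2},max{y_1,y_2}]) = |x_2−x_1|·|y_2−y_1| for all pairs of points (x_1,y_1),(x_2,y_2) ∈ supp μ, then μ is the uniform permuton, i.e. two-dimensional Lebesgue measure on [0,1]². -/
open MeasureTheory Filter

structure PData (S : Set (ℝ × ℝ)) (F : ℝ → ℝ → ℝ) : Prop where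
  closed : IsClosed S
  sub : ∀ p ∈ S, (0 ≤ p.1 ∧ p.1 ≤ 1) ∧ (0 ≤ p.2 ∧ p.2 ≤ 1)
  F0y : ∀ y, 0 ≤ y → y ≤ 1 → F 0 y = 0
  Fx0 : ∀ x, 0 ≤ x → x ≤ 1 → F x 0 = 0
  F1y : ∀ y, 0 ≤ y → y ≤ 1 → F 1 y = y
  Fx1 : ∀ x, 0 ≤ x → x ≤ 1 → F x 1 = x
  nonneg : ∀ x₁ x₂ y₁ y₂, 0 ≤ x₁ → x₁ ≤ x₂ → x₂ ≤ 1 → 0 ≤ y₁ → y₁ ≤ y₂ → y₂ ≤ 1 →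
    0 ≤ F x₂ y₂ - F x₁ y₂ - F x₂ y₁ + F x₁ y₁
  empty : ∀ x₁ x₂ y₁ y₂, 0 ≤ x₁ → x₁ ≤ x₂ → x₂ ≤ 1 → 0 ≤ y₁ → y₁ ≤ y₂ → y₂ ≤ 1 →
    (∀ a b, x₁ < a → a < x₂ → y₁ < b → b < y₂ → (a, b) ∉ S) →
    F x₂ y₂ - F x₁ y₂ - F x₂ y₁ + F x₁ y₁ = 0
  area : ∀ x₁ x₂ y₁ y₂, (x₁, y₁) ∈ S → (x₂, y₂) ∈ S →
    F x₂ y₂ - F x₁ y₂ - F x₂ y₁ + F x₁ y₁ = (x₂ - x₁) * (y₂ - y₁)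

namespace PData

variable {S : Set (ℝ × ℝ)} {F : ℝ → ℝ → ℝ}

theorem compact (D : PData S F) : IsCompact S := by
  refine (isCompact_Icc (a := ((0 : ℝ), (0 : ℝ))) (b := ((1 : ℝ), (1 : ℝ)))).of_isClosed_subset
    D.closed ?_
  intro p hp
  obtain ⟨⟨h1, h2⟩, h3, h4⟩ := D.sub p hp
  exact ⟨⟨h1, h3⟩, ⟨h2, h4⟩⟩

theorem swap (D : PData S F) : PData {p | (p.2, p.1) ∈ S} (fun x y => F y x) where
  closed := D.closed.preimage (by fun_prop : Continuous fun p : ℝ × ℝ => (p.2, p.1))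
  sub := fun p hp => (D.sub _ hp).symm
  F0y := D.Fx0
  Fx0 := D.F0y
  F1y := D.Fx1
  Fx1 := D.F1y
  nonneg := by
    intro x₁ x₂ y₁ y₂ a b c d e f
    have := D.nonneg y₁ y₂ x₁ x₂ d e f a b c
    linarith
  empty := by
    intro x₁ x₂ y₁ y₂ a b c d e f g
    have := D.empty y₁ y₂ x₁ x₂ d e f a b c (fun u v h1 h2 h3 h4 => g v u h3 h4 h1 h2)
    linarith
  area := by
    intro x₁ x₂ y₁ y₂ h1 h2
    have := D.area y₁ y₂ x₁ x₂ h1 h2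
    linarith

theorem refl (D : PData S F) : PData {p | (p.1, 1 - p.2) ∈ S} (fun x y => x - F x (1 - y)) where
  closed := D.closed.preimage (by fun_prop : Continuous fun p : ℝ × ℝ => (p.1, 1 - p.2))
  sub := by
    intro p hp
    obtain ⟨h, h3, h4⟩ := D.sub _ hp
    simp only at h h3 h4
    exact ⟨h, by linarith, by linarith⟩
  F0y := by
    intro y h1 h2
    have := D.F0y (1 - y) (by linarith) (by linarith)
    linarith
  Fx0 := by
    intro x h1 h2
    have := D.Fx1 x h1 h2
    simp [this]
  F1y := by
    intro y h1 h2
    have := D.F1y (1 - y) (by linarith) (by linarith)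
    linarith
  Fx1 := by
    intro x h1 h2
    have := D.Fx0 x h1 h2
    simp [this]
  nonneg := by
    intro x₁ x₂ y₁ y₂ a b c d e f
    have := D.nonneg x₁ x₂ (1 - y₂) (1 - y₁) a b c (by linarith) (by linarith) (by linarith)
    linarith
  empty := by
    intro x₁ x₂ y₁ y₂ a b c d e f g
    have := D.empty x₁ x₂ (1 - y₂) (1 - y₁) a b c (by linarith) (by linarith) (by linarith)
      (fun u v h1 h2 h3 h4 h5 => g u (1 - v) h1 h2 (by linarith) (by linarith) (by simpa using h5))
    linarith
  area := by
    intro x₁ x₂ y₁ y₂ h1 h2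
    have := D.area x₁ x₂ (1 - y₁) (1 - y₂) h1 h2
    linarith

theorem col_nonempty (D : PData S F) {x : ℝ} (h0 : 0 ≤ x) (h1 : x ≤ 1) : ∃ y, (x, y) ∈ S := by
  have hc : IsClosed (Prod.fst '' S) := (D.compact.image continuous_fst).isClosed
  have key : x ∈ closure (Prod.fst '' S) := by
    rw [Metric.mem_closure_iff]
    intro ε hε
    set l := max 0 (x - ε) with hl
    set r := min 1 (x + ε) with hr
    have hl0 : 0 ≤ l := le_max_left _ _
    have hr1 : r ≤ 1 := min_le_left _ _
    have hlr : l < r := by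
      rw [hl, hr, max_lt_iff, lt_min_iff, lt_min_iff]
      refine ⟨⟨by linarith, by linarith⟩, by linarith, by linarith⟩
    by_contra hcon
    have := D.empty l r 0 1 hl0 hlr.le hr1 le_rfl zero_le_one le_rfl (by
      intro a b ha hb _ _ hab
      apply hcon
      refine ⟨a, ⟨_, hab, rfl⟩, ?_⟩
      rw [Real.dist_eq, abs_lt]
      have := le_max_right 0 (x - ε)
      have := min_le_right 1 (x + ε)
      constructor <;> linarith)
    rw [D.Fx1 r (by linarith) hr1, D.Fx1 l hl0 (by linarith), D.Fx0 r (by linarith) hr1,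
      D.Fx0 l hl0 (by linarith)] at this
    linarith
  rw [hc.closure_eq] at key
  obtain ⟨⟨a, b⟩, hab, rfl⟩ := key
  exact ⟨b, hab⟩

theorem row_nonempty (D : PData S F) {y : ℝ} (h0 : 0 ≤ y) (h1 : y ≤ 1) : ∃ x, (x, y) ∈ S :=
  D.swap.col_nonempty h0 h1

/-- On the support, the discrepancy depends only on `x`. -/
theorem col_const (D : PData S F) : ∃ a, 0 ≤ a ∧ a ≤ 1 ∧
    ∀ x y, (x, y) ∈ S → F x y - x * y = F x a - x * a := by
  obtain ⟨a, ha⟩ := D.col_nonempty le_rfl zero_le_one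
  obtain ⟨-, h1, h2⟩ := D.sub _ ha
  refine ⟨a, h1, h2, fun x y hxy => ?_⟩
  obtain ⟨-, h3, h4⟩ := D.sub _ hxy
  have := D.area 0 x a y ha hxy
  rw [D.F0y _ h3 h4, D.F0y _ h1 h2] at this
  linarith

theorem row_eq (D : PData S F) {x x' y : ℝ} (h : (x, y) ∈ S) (h' : (x', y) ∈ S) :
    F x y - x * y = F x' y - x' * y := by
  obtain ⟨a, -, -, ha⟩ := D.swap.col_const
  have h1 := ha y x h
  have h2 := ha y x' h'
  linarith

theorem claim (D : PData S F) {x t y : ℝ} (ht : ∀ y, t < y → (x, y) ∉ S) (hy : t < y)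
    (hL : ∃ p ∈ S, p.1 ≤ x ∧ y ≤ p.2) (hR : ∃ p ∈ S, x ≤ p.1 ∧ y ≤ p.2) :
    ∃ u, u < x ∧ (u, 1) ∈ S ∧ ∀ p ∈ S, p.1 ≤ x → y ≤ p.2 → p.1 ≤ u := by
  have cL : IsCompact (S ∩ {p : ℝ × ℝ | p.1 ≤ x ∧ y ≤ p.2}) := by
    apply D.compact.inter_right
    exact (isClosed_le continuous_fst continuous_const).inter
      (isClosed_le continuous_const continuous_snd)
  have cR : IsCompact (S ∩ {p : ℝ × ℝ | x ≤ p.1 ∧ y ≤ p.2}) := by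
    apply D.compact.inter_right
    exact (isClosed_le continuous_const continuous_fst).inter
      (isClosed_le continuous_const continuous_snd)
  obtain ⟨⟨u, v⟩, ⟨huS, hux, hvy⟩, hu⟩ := cL.exists_isMaxOn
    (by obtain ⟨p, a, b⟩ := hL; exact ⟨p, a, b⟩) continuous_fst.continuousOn
  obtain ⟨⟨u', v'⟩, ⟨huS', hux', hvy'⟩, hu'⟩ := cR.exists_isMinOn
    (by obtain ⟨p, a, b⟩ := hR; exact ⟨p, a, b⟩) continuous_fst.continuousOn
  simp only at hux hvy hux' hvy'
  have hult : u < x := by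
    rcases hux.lt_or_eq with h | h
    · exact h
    · subst h; exact absurd huS (ht v (by linarith))
  have hult' : x < u' := by
    rcases hux'.lt_or_eq with h | h
    · exact h
    · subst h; exact absurd huS' (ht v' (by linarith))
  have hmax : ∀ p ∈ S, p.1 ≤ x → y ≤ p.2 → p.1 ≤ u := fun p a b c => hu ⟨a, b, c⟩
  have hmin : ∀ p ∈ S, x ≤ p.1 → y ≤ p.2 → u' ≤ p.1 := fun p a b c => hu' ⟨a, b, c⟩
  have hemp : ∀ a b, u < a → a < u' → y ≤ b → (a, b) ∉ S := by
    intro a b h1 h2 h3 h4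
    rcases le_total a x with h | h
    · have := hmax _ h4 h h3
      simp only at this; linarith
    · have := hmin _ h4 h h3
      simp only at this; linarith
  obtain ⟨⟨b1, b2⟩, b3, b4⟩ := D.sub _ huS
  obtain ⟨⟨b1', b2'⟩, b3', b4'⟩ := D.sub _ huS'
  simp only at b1 b2 b3 b4 b1' b2' b3' b4'
  have hvv : v = v' := by
    have hA := D.area _ _ _ _ huS huS'
    have hz : (u' - u) * (v' - v) = 0 := by
      rcases le_total v v' with h | h
      · have := D.empty u u' v v' b1 (by linarith) b2' b3 h b4'
          (fun a b h1 h2 h3 h4 => hemp a b h1 h2 (by linarith))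
        linarith
      · have := D.empty u u' v' v b1 (by linarith) b2' b3' h b4
          (fun a b h1 h2 h3 h4 => hemp a b h1 h2 (by linarith))
        linarith
    rcases mul_eq_zero.mp hz with h | h <;> linarith
  subst hvv
  have h1 := D.empty u u' v 1 b1 (by linarith) b2' b3 b4 le_rfl
          (fun a b h1 h2 h3 h4 => hemp a b h1 h2 (by linarith))
  have h2 := D.row_eq huS huS'
  rw [D.Fx1 _ b1 b2, D.Fx1 _ b1' b2'] at h1
  have hv : v = 1 := by
    have : (u' - u) * (1 - v) = 0 := by linarith
    rcases mul_eq_zero.mp this with h | h <;> linarith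
  subst hv
  exact ⟨u, hult, huS, hmax⟩

/-- At the top of a column, the upper-left or the upper-right quadrant is empty. -/
theorem top (D : PData S F) {x t : ℝ} (hS : (x, t) ∈ S) (ht : ∀ y, t < y → (x, y) ∉ S) :
    F x t = x ∨ 1 - x - t + F x t = 0 := by
  obtain ⟨⟨b1, b2⟩, b3, b4⟩ := D.sub _ hS
  simp only at b1 b2 b3 b4
  by_contra! hcon
  obtain ⟨hc1, hc2⟩ := hcon
  have e1 : ∃ a b, 0 < a ∧ a < x ∧ t < b ∧ b < 1 ∧ (a, b) ∈ S := by
    by_contra! h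
    have := D.empty 0 x t 1 le_rfl b1 b2 b3 b4 le_rfl h
    rw [D.Fx1 _ b1 b2, D.F0y _ b3 b4, D.F0y _ zero_le_one le_rfl] at this
    apply hc1; linarith
  have e2 : ∃ a b, x < a ∧ a < 1 ∧ t < b ∧ b < 1 ∧ (a, b) ∈ S := by
    by_contra! h
    have := D.empty x 1 t 1 b1 b2 le_rfl b3 b4 le_rfl h
    rw [D.Fx1 _ b1 b2, D.F1y _ b3 b4, D.F1y _ zero_le_one le_rfl] at this
    apply hc2; linarith
  obtain ⟨s1, s2, -, hs1, hs2, hs3, hs⟩ := e1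
  obtain ⟨r1, r2, hr1, -, hr2, hr3, hr⟩ := e2
  obtain ⟨u, hux, huS, humax⟩ := D.claim (y := min s2 r2) ht (lt_min hs2 hr2)
    ⟨_, hs, hs1.le, min_le_left _ _⟩ ⟨_, hr, hr1.le, min_le_right _ _⟩
  have hA := D.area _ _ _ _ huS hS
  obtain ⟨⟨c1, c2⟩, -⟩ := D.sub _ huS
  simp only at c1 c2
  have e3 : ∃ a b, u < a ∧ a < x ∧ t < b ∧ b < 1 ∧ (a, b) ∈ S := by
    by_contra! h
    have := D.empty u x t 1 c1 hux.le b2 b3 b4 le_rfl h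
    have h2 : 0 < (x - u) * (1 - t) := mul_pos (by linarith) (by linarith)
    linarith
  obtain ⟨q1, q2, hq0, hq1, hq2, hq3, hq⟩ := e3
  obtain ⟨u2, hux2, huS2, humax2⟩ := D.claim (y := min q2 r2) ht (lt_min hq2 hr2)
    ⟨_, hq, hq1.le, min_le_left _ _⟩ ⟨_, hr, hr1.le, min_le_right _ _⟩
  have h1 := humax2 _ hq hq1.le (min_le_left _ _)
  have h2 := humax _ huS2 hux2.le ((min_le_left _ _).trans hs3.le)
  simp only at h1 h2
  linarith

theorem exists_top (D : PData S F) {x : ℝ} (h0 : 0 ≤ x) (h1 : x ≤ 1) :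
    ∃ t, (x, t) ∈ S ∧ (F x t = x ∨ 1 - x - t + F x t = 0) := by
  obtain ⟨y, hy⟩ := D.col_nonempty h0 h1
  have c : IsCompact (S ∩ {p : ℝ × ℝ | p.1 = x}) :=
    D.compact.inter_right (isClosed_eq continuous_fst continuous_const)
  obtain ⟨⟨u, v⟩, ⟨huS, hux⟩, hu⟩ := c.exists_isMaxOn ⟨_, hy, rfl⟩ continuous_snd.continuousOn
  simp only [Set.mem_ofPred_eq] at hux
  subst hux
  refine ⟨v, huS, D.top huS ?_⟩
  intro z hz hzS
  have : z ≤ v := hu ⟨hzS, rfl⟩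
  linarith

theorem exists_bot (D : PData S F) {x : ℝ} (h0 : 0 ≤ x) (h1 : x ≤ 1) :
    ∃ b, (x, b) ∈ S ∧ (F x b = 0 ∨ F x b = b) := by
  obtain ⟨t, ht, h⟩ := D.refl.exists_top h0 h1
  refine ⟨1 - t, ht, ?_⟩
  rcases h with h | h
  · left; linarith
  · right; linarith

theorem nonneg_disc (D : PData S F) {x y : ℝ} (hS : (x, y) ∈ S) : 0 ≤ F x y - x * y := by
  by_contra! hneg
  obtain ⟨a, ha0, ha1, ha⟩ := D.col_const
  obtain ⟨⟨b1, b2⟩, -, -⟩ := D.sub _ hS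
  simp only at b1 b2
  rw [ha _ _ hS] at hneg
  have hx1 : x ≠ 1 := by
    rintro rfl
    rw [D.F1y _ ha0 ha1] at hneg
    linarith
  have hx1 : x < 1 := lt_of_le_of_ne b2 hx1
  have hx0 : 0 < x := by
    rcases b1.lt_or_eq with h | h
    · exact h
    · subst h; rw [D.F0y _ ha0 ha1] at hneg; linarith
  obtain ⟨x', h1, h2, hneg'⟩ : ∃ x', x < x' ∧ x' < 1 ∧ F x' a - x' * a < 0 := by
    set δ := min ((1 - x) / 2) (-(F x a - x * a) / 2) with hδ
    have d1 : δ ≤ (1 - x) / 2 := min_le_left _ _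
    have d2 : δ ≤ -(F x a - x * a) / 2 := min_le_right _ _
    have d0 : 0 < δ := lt_min (by linarith) (by linarith)
    refine ⟨x + δ, by linarith, by linarith, ?_⟩
    have := D.nonneg x (x + δ) a 1 b1 (by linarith) (by linarith) ha0 ha1 le_rfl
    rw [D.Fx1 _ b1 b2, D.Fx1 _ (by linarith) (by linarith)] at this
    have : 0 ≤ δ * a := mul_nonneg d0.le ha0
    linarith
  obtain ⟨t, htS, ht⟩ := D.exists_top b1 b2
  obtain ⟨b, hbS, hb⟩ := D.exists_bot (x := x') (by linarith) h2.le
  obtain ⟨-, t0, t1⟩ := D.sub _ htS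
  obtain ⟨-, c0, c1⟩ := D.sub _ hbS
  simp only at t0 t1 c0 c1
  rw [← ha _ _ htS] at hneg
  rw [← ha _ _ hbS] at hneg'
  have ht' : 1 - x - t + F x t = 0 := by
    rcases ht with h | h
    · have : 0 ≤ x * (1 - t) := mul_nonneg b1 (by linarith)
      linarith
    · exact h
  have hb' : F x' b = 0 := by
    rcases hb with h | h
    · exact h
    · have : 0 ≤ b * (1 - x') := mul_nonneg c0 (by linarith)
      linarith
  have hA := D.area _ _ _ _ htS hbS
  -- monotonicity
  have m1 := D.nonneg x x' 0 b b1 h1.le h2.le le_rfl c0 c1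
  have m2 := D.nonneg 0 x 0 b le_rfl b1 b2 le_rfl c0 c1
  rw [D.Fx0 _ b1 b2, D.Fx0 _ (by linarith) h2.le] at m1
  rw [D.Fx0 _ b1 b2, D.F0y _ c0 c1, D.F0y _ le_rfl zero_le_one] at m2
  have m3 := D.nonneg x x' t 1 b1 h1.le h2.le t0 t1 le_rfl
  have m4 := D.nonneg x' 1 t 1 (by linarith) h2.le le_rfl t0 t1 le_rfl
  rw [D.Fx1 _ b1 b2, D.Fx1 _ (by linarith) h2.le] at m3
  rw [D.Fx1 _ (by linarith) h2.le, D.F1y _ t0 t1, D.F1y _ zero_le_one le_rfl] at m4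
  have hz : (x' - x) * (1 - (t - b)) = 0 := by linarith
  have htb : t - b = 1 := by
    rcases mul_eq_zero.mp hz with h | h <;> linarith
  have : t = 1 := by linarith
  subst this
  rw [D.Fx1 _ b1 b2] at hneg
  linarith

theorem disc_zero (D : PData S F) {x y : ℝ} (hS : (x, y) ∈ S) : F x y = x * y := by
  have h1 := D.nonneg_disc hS
  have h2 := D.refl.nonneg_disc (x := x) (y := 1 - y) (by simpa using hS)
  simp only [sub_sub_cancel] at h2
  linarith

theorem bottom_mem (D : PData S F) {x : ℝ} (h0 : 0 < x) (h1 : x < 1) : (x, 0) ∈ S := by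
  obtain ⟨b, hb, h⟩ := D.exists_bot h0.le h1.le
  have hd := D.disc_zero hb
  have : b = 0 := by
    rcases h with h | h
    · rw [h] at hd
      rcases mul_eq_zero.mp hd.symm with h | h
      · linarith
      · exact h
    · have : (1 - x) * b = 0 := by linarith
      rcases mul_eq_zero.mp this with h | h
      · linarith
      · exact h
  rwa [this] at hb

theorem F_eq (D : PData S F) {x y : ℝ} (h0 : 0 ≤ x) (h1 : x ≤ 1) (k0 : 0 ≤ y) (k1 : y ≤ 1) :
    F x y = x * y := by
  rcases h0.lt_or_eq with h0' | rfl
  swap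
  · rw [D.F0y _ k0 k1]; ring
  rcases h1.lt_or_eq with h1' | rfl
  swap
  · rw [D.F1y _ k0 k1]; ring
  rcases k0.lt_or_eq with k0' | rfl
  swap
  · rw [D.Fx0 _ h0 h1]; ring
  rcases k1.lt_or_eq with k1' | rfl
  swap
  · rw [D.Fx1 _ h0 h1]; ring
  have := D.area _ _ _ _ (D.bottom_mem h0' h1') (D.swap.bottom_mem k0' k1')
  rw [D.Fx0 _ h0 h1, D.F0y _ k0 k1, D.F0y _ le_rfl zero_le_one] at this
  linarith

end PData

theorem mem_measSupport_null (μ : Measure (ℝ × ℝ)) (U : Set (ℝ × ℝ))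
    (hU : ∀ p ∈ U, p ∉ measSupport μ) : μ U = 0 := by
  apply measure_null_of_locally_null
  intro p hp
  have := hU p hp
  simp only [measSupport, Set.mem_ofPred_eq, not_forall, not_lt, nonpos_iff_eq_zero] at this
  obtain ⟨V, hV, hpV, h0⟩ := this
  exact ⟨V, mem_nhdsWithin_of_mem_nhds (hV.mem_nhds hpV), h0⟩

theorem isClosed_measSupport (μ : Measure (ℝ × ℝ)) : IsClosed (measSupport μ) := by
  rw [← isOpen_compl_iff, isOpen_iff_mem_nhds]
  intro p hp
  simp only [measSupport, Set.mem_compl_iff, Set.mem_ofPred_eq, not_forall, not_lt,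
    nonpos_iff_eq_zero] at hp
  obtain ⟨V, hV, hpV, h0⟩ := hp
  filter_upwards [hV.mem_nhds hpV] with q hq hqS
  exact (hqS V hV hq).ne' h0

section
variable {μ : Measure (ℝ × ℝ)}

theorem perm_ae (hμ : IsPermuton μ) : ∀ᵐ p ∂μ, p ∈ Set.Icc (0 : ℝ) 1 ×ˢ Set.Icc (0 : ℝ) 1 := by
  have := hμ.1
  have h := hμ.2.1 0 1 le_rfl zero_le_one le_rfl
  rw [sub_zero, ENNReal.ofReal_one] at h
  exact (mem_ae_iff_prob_eq_one (measurableSet_Icc.prod measurableSet_Icc)).2 h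

theorem perm_fst (hμ : IsPermuton μ) (x : ℝ) : ∀ᵐ p ∂μ, p.1 ≠ x := by
  by_cases hx : 0 ≤ x ∧ x ≤ 1
  · have h := hμ.2.1 x x hx.1 le_rfl hx.2
    rw [sub_self, ENNReal.ofReal_zero] at h
    have h' := measure_eq_zero_iff_ae_notMem.1 h
    filter_upwards [h', perm_ae hμ] with p hp hq he
    exact hp ⟨⟨he.ge, he.le⟩, hq.2⟩
  · filter_upwards [perm_ae hμ] with p hp he
    exact hx (he ▸ hp.1)

theorem perm_snd (hμ : IsPermuton μ) (y : ℝ) : ∀ᵐ p ∂μ, p.2 ≠ y := by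
  by_cases hx : 0 ≤ y ∧ y ≤ 1
  · have h := hμ.2.2 y y hx.1 le_rfl hx.2
    rw [sub_self, ENNReal.ofReal_zero] at h
    have h' := measure_eq_zero_iff_ae_notMem.1 h
    filter_upwards [h', perm_ae hμ] with p hp hq he
    exact hp ⟨hq.1, ⟨he.ge, he.le⟩⟩
  · filter_upwards [perm_ae hμ] with p hp he
    exact hx (he ▸ hp.2)

def permF (μ : Measure (ℝ × ℝ)) (x y : ℝ) : ℝ := μ.real (Set.Iic x ×ˢ Set.Iic y)

theorem permF_rect [IsFiniteMeasure μ] {x₁ x₂ y₁ y₂ : ℝ} (hx : x₁ ≤ x₂) (hy : y₁ ≤ y₂) :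
    permF μ x₂ y₂ - permF μ x₁ y₂ - permF μ x₂ y₁ + permF μ x₁ y₁ =
      μ.real (Set.Ioc x₁ x₂ ×ˢ Set.Ioc y₁ y₂) := by
  have key : ∀ y, permF μ x₂ y = permF μ x₁ y + μ.real (Set.Ioc x₁ x₂ ×ˢ Set.Iic y) := by
    intro y
    unfold permF
    rw [← measureReal_union, ← Set.union_prod, Set.Iic_union_Ioc_eq_Iic hx]
    · rw [Set.disjoint_left]
      rintro p ⟨h1, -⟩ ⟨⟨h2, -⟩, -⟩
      exact absurd h1 (not_le.2 h2)
    · exact measurableSet_Ioc.prod measurableSet_Iic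
  have key2 : μ.real (Set.Ioc x₁ x₂ ×ˢ Set.Iic y₂) = μ.real (Set.Ioc x₁ x₂ ×ˢ Set.Iic y₁) +
      μ.real (Set.Ioc x₁ x₂ ×ˢ Set.Ioc y₁ y₂) := by
    rw [← measureReal_union, ← Set.prod_union, Set.Iic_union_Ioc_eq_Iic hy]
    · rw [Set.disjoint_left]
      rintro p ⟨-, h1⟩ ⟨-, ⟨h2, -⟩⟩
      exact absurd h1 (not_le.2 h2)
    · exact measurableSet_Ioc.prod measurableSet_Ioc
  rw [key y₂, key y₁, key2]
  ring

theorem perm_Icc (hμ : IsPermuton μ) (x₁ x₂ y₁ y₂ : ℝ) :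
    μ (Set.Ioc x₁ x₂ ×ˢ Set.Ioc y₁ y₂) = μ (Set.Icc x₁ x₂ ×ˢ Set.Icc y₁ y₂) := by
  apply measure_congr
  filter_upwards [perm_fst hμ x₁, perm_snd hμ y₁] with p h1 h2
  apply propext
  constructor
  · rintro ⟨⟨a, b⟩, c, d⟩
    exact ⟨⟨a.le, b⟩, c.le, d⟩
  · rintro ⟨⟨a, b⟩, c, d⟩
    exact ⟨⟨lt_of_le_of_ne a h1.symm, b⟩, lt_of_le_of_ne c h2.symm, d⟩

theorem perm_Ioo (hμ : IsPermuton μ) (x₁ x₂ y₁ y₂ : ℝ) :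
    μ (Set.Ioc x₁ x₂ ×ˢ Set.Ioc y₁ y₂) = μ (Set.Ioo x₁ x₂ ×ˢ Set.Ioo y₁ y₂) := by
  apply measure_congr
  filter_upwards [perm_fst hμ x₂, perm_snd hμ y₂] with p h1 h2
  apply propext
  constructor
  · rintro ⟨⟨a, b⟩, c, d⟩
    exact ⟨⟨a, lt_of_le_of_ne b h1⟩, c, lt_of_le_of_ne d h2⟩
  · rintro ⟨⟨a, b⟩, c, d⟩
    exact ⟨⟨a, b.le⟩, c, d.le⟩

theorem perm_data (hμ : IsPermuton μ) 
    (h : ∀ p ∈ measSupport μ, ∀ q ∈ measSupport μ,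
      μ (Set.Icc (min p.1 q.1) (max p.1 q.1) ×ˢ Set.Icc (min p.2 q.2) (max p.2 q.2)) =
        ENNReal.ofReal (|q.1 - p.1| * |q.2 - p.2|)) :
    PData (measSupport μ) (permF μ) := by
  have := hμ.1
  refine ⟨isClosed_measSupport μ, ?_, ?_, ?_, ?_, ?_, ?_, ?_, ?_⟩
  · intro p hp
    by_contra hc
    have hO : IsOpen (Set.Icc (0 : ℝ) 1 ×ˢ Set.Icc (0 : ℝ) 1)ᶜ :=
      (isClosed_Icc.prod isClosed_Icc).isOpen_compl
    exact (hp _ hO hc).ne' (perm_ae hμ)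
  · intro y _ _
    have : μ (Set.Iic 0 ×ˢ Set.Iic y) = 0 := by
      rw [measure_eq_zero_iff_ae_notMem]
      filter_upwards [perm_ae hμ, perm_fst hμ 0] with p h1 h2 h3
      exact h2 (le_antisymm h3.1 h1.1.1)
    rw [permF, measureReal_def, this, ENNReal.toReal_zero]
  · intro y _ _
    have : μ (Set.Iic y ×ˢ Set.Iic 0) = 0 := by
      rw [measure_eq_zero_iff_ae_notMem]
      filter_upwards [perm_ae hμ, perm_snd hμ 0] with p h1 h2 h3
      exact h2 (le_antisymm h3.2 h1.2.1)
    rw [permF, measureReal_def, this, ENNReal.toReal_zero]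
  · intro y h0 h1
    have : μ (Set.Iic 1 ×ˢ Set.Iic y) = ENNReal.ofReal (y - 0) := by
      rw [← hμ.2.2 0 y le_rfl h0 h1]
      apply measure_congr
      filter_upwards [perm_ae hμ] with p hp
      apply propext
      exact ⟨fun a => ⟨hp.1, hp.2.1, a.2⟩, fun a => ⟨a.1.2, a.2.2⟩⟩
    rw [permF, measureReal_def, this, sub_zero, ENNReal.toReal_ofReal h0]
  · intro y h0 h1
    have : μ (Set.Iic y ×ˢ Set.Iic 1) = ENNReal.ofReal (y - 0) := by
      rw [← hμ.2.1 0 y le_rfl h0 h1]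
      apply measure_congr
      filter_upwards [perm_ae hμ] with p hp
      apply propext
      exact ⟨fun a => ⟨⟨hp.1.1, a.1⟩, hp.2⟩, fun a => ⟨a.1.2, a.2.2⟩⟩
    rw [permF, measureReal_def, this, sub_zero, ENNReal.toReal_ofReal h0]
  · intro x₁ x₂ y₁ y₂ _ hx _ _ hy _
    rw [permF_rect hx hy]
    exact measureReal_nonneg
  · intro x₁ x₂ y₁ y₂ _ hx _ _ hy _ he
    rw [permF_rect hx hy, measureReal_def, perm_Ioo hμ, mem_measSupport_null, ENNReal.toReal_zero]
    rintro ⟨a, b⟩ ⟨⟨h1, h2⟩, h3, h4⟩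
    exact he a b h1 h2 h3 h4
  · intro x₁ x₂ y₁ y₂ h1 h2
    have hA := h _ h1 _ h2
    have hR := permF_rect (μ := μ) (min_le_max (a := x₁) (b := x₂)) (min_le_max (a := y₁) (b := y₂))
    rw [measureReal_def, perm_Icc hμ] at hR
    simp only at hA
    rw [hA, ENNReal.toReal_ofReal (by positivity)] at hR
    rcases le_total x₁ x₂ with hx | hx <;> rcases le_total y₁ y₂ with hy | hy <;>
      simp only [min_eq_left, min_eq_right, max_eq_left, max_eq_right, hx, hy, abs_of_nonneg,
        abs_of_nonpos, sub_nonneg, sub_nonpos] at hR <;> linarith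

end

theorem statement_2 (μ : Measure (ℝ × ℝ)) (hμ : IsPermuton μ)
    (h : ∀ p ∈ measSupport μ, ∀ q ∈ measSupport μ,
      μ (Set.Icc (min p.1 q.1) (max p.1 q.1) ×ˢ Set.Icc (min p.2 q.2) (max p.2 q.2)) =
        ENNReal.ofReal (|q.1 - p.1| * |q.2 - p.2|)) :
    μ = uniformPermuton := by
  have D := perm_data hμ h
  have := hμ.1
  have hI : ∀ x : ℝ, volume.restrict (Set.Icc (0 : ℝ) 1) (Set.Iic x) =
      ENNReal.ofReal (min x 1) := by
    intro x
    rw [Measure.restrict_apply measurableSet_Iic]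
    have : Set.Iic x ∩ Set.Icc (0 : ℝ) 1 = Set.Icc 0 (min x 1) := by
      ext z; simp; tauto
    rw [this, Real.volume_Icc, sub_zero]
  unfold uniformPermuton
  rw [Measure.volume_eq_prod, ← Measure.prod_restrict]
  symm
  have hspan : (volume.restrict (Set.Icc (0 : ℝ) 1)).FiniteSpanningSetsIn
      (Set.range (Set.Iic : ℝ → Set ℝ)) := 
    { set := fun n => Set.Iic (n : ℝ)
      set_mem := fun n => ⟨n, rfl⟩
      finite := fun n => by rw [hI]; exact ENNReal.ofReal_lt_top
      spanning := by
        rw [Set.eq_univ_iff_forall]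
        intro x
        obtain ⟨n, hn⟩ := exists_nat_ge x
        exact Set.mem_iUnion.2 ⟨n, hn⟩ }
  refine Measure.prod_eq_generateFrom (borel_eq_generateFrom_Iic ℝ).symm
    (borel_eq_generateFrom_Iic ℝ).symm isPiSystem_Iic isPiSystem_Iic hspan hspan ?_
  rintro _ ⟨x, rfl⟩ _ ⟨y, rfl⟩
  rw [hI, hI]
  by_cases hx : x < 0
  · rw [ENNReal.ofReal_of_nonpos ((min_le_left _ _).trans hx.le), zero_mul,
      measure_eq_zero_iff_ae_notMem]
    filter_upwards [perm_ae hμ] with p hp hq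
    exact absurd (hp.1.1.trans hq.1) (not_le.2 hx)
  by_cases hy : y < 0
  · rw [ENNReal.ofReal_of_nonpos ((min_le_left y _).trans hy.le), mul_zero,
      measure_eq_zero_iff_ae_notMem]
    filter_upwards [perm_ae hμ] with p hp hq
    exact absurd (hp.2.1.trans hq.2) (not_le.2 hy)
  push Not at hx hy
  have e : μ (Set.Iic x ×ˢ Set.Iic y) = μ (Set.Iic (min x 1) ×ˢ Set.Iic (min y 1)) := by
    apply measure_congr
    filter_upwards [perm_ae hμ] with p hp
    apply propext
    exact ⟨fun a => ⟨le_min a.1 hp.1.2, le_min a.2 hp.2.2⟩,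
      fun a => ⟨Set.Iic_subset_Iic.2 (min_le_left x 1) a.1,
        Set.Iic_subset_Iic.2 (min_le_left y 1) a.2⟩⟩
  have hx' : 0 ≤ min x 1 := le_min hx zero_le_one
  have hy' : 0 ≤ min y 1 := le_min hy zero_le_one
  have hF := D.F_eq hx' (min_le_right _ _) hy' (min_le_right _ _)
  rw [e, ← ENNReal.ofReal_mul hx', ← hF, permF, ofReal_measureReal]
end

section
/- Let μ be a permuton and let (x_1,y_1),(x_2,y_2) ∈ [0,1]² with x_1 ≤ x_2 and y_1 ≤ y_2. Set x_0 = y_0 = 0 and x_3 = y_3 = 1, and for i,j ∈ {1,2,3} let a_{ij} = μ([x_{i−1},x_i]×[y_{j−1},y_j]). If a_{22}a_{33} − a_{23}a_{32} + a_{22}a_{11} − a_{12}a_{21} + a_{22}a_{31} − a_{21}a_{32} + a_{22}a_{13} − a_{12}a_{23} = 0, then a_{22} = (x_2−x_1)(y_2−y_1). -/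
open MeasureTheory Filter

theorem row_add (μ : Measure (ℝ × ℝ)) (hμ : IsPermuton μ) (x x' u v w : ℝ)
    (hx : 0 ≤ x) (hx' : x' ≤ 1) (hu : 0 ≤ u) (huv : u ≤ v) (hvw : v ≤ w) (hw : w ≤ 1) :
    (μ (Set.Icc x x' ×ˢ Set.Icc u v)).toReal + (μ (Set.Icc x x' ×ˢ Set.Icc v w)).toReal =
      (μ (Set.Icc x x' ×ˢ Set.Icc u w)).toReal := by
  obtain ⟨hp, -, hc⟩ := hμ
  have h := measure_union_add_inter (μ := μ) (Set.Icc x x' ×ˢ Set.Icc u v)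
    (t := Set.Icc x x' ×ˢ Set.Icc v w) (measurableSet_Icc.prod measurableSet_Icc)
  have h0 : μ (Set.Icc x x' ×ˢ Set.Icc u v ∩ Set.Icc x x' ×ˢ Set.Icc v w) = 0 := by
    refine measure_mono_null (t := Set.Icc (0 : ℝ) 1 ×ˢ Set.Icc v v) ?_ ?_
    · rintro ⟨p, q⟩ h
      simp only [Set.mem_inter_iff, Set.mem_prod, Set.mem_Icc] at h ⊢
      refine ⟨⟨?_, ?_⟩, ?_, ?_⟩ <;> linarith [h.1.1.1, h.1.1.2, h.1.2.2, h.2.2.1]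
    · rw [hc v v (by linarith) le_rfl (by linarith)]; simp
  rw [h0, add_zero, ← Set.prod_union, Set.Icc_union_Icc_eq_Icc huv hvw] at h
  rw [h, ENNReal.toReal_add (measure_ne_top _ _) (measure_ne_top _ _)]

theorem col_add (μ : Measure (ℝ × ℝ)) (hμ : IsPermuton μ) (y y' u v w : ℝ)
    (hy : 0 ≤ y) (hy' : y' ≤ 1) (hu : 0 ≤ u) (huv : u ≤ v) (hvw : v ≤ w) (hw : w ≤ 1) :
    (μ (Set.Icc u v ×ˢ Set.Icc y y')).toReal + (μ (Set.Icc v w ×ˢ Set.Icc y y')).toReal =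
      (μ (Set.Icc u w ×ˢ Set.Icc y y')).toReal := by
  obtain ⟨hp, hc, -⟩ := hμ
  have h := measure_union_add_inter (μ := μ) (Set.Icc u v ×ˢ Set.Icc y y')
    (t := Set.Icc v w ×ˢ Set.Icc y y') (measurableSet_Icc.prod measurableSet_Icc)
  have h0 : μ (Set.Icc u v ×ˢ Set.Icc y y' ∩ Set.Icc v w ×ˢ Set.Icc y y') = 0 := by
    refine measure_mono_null (t := Set.Icc v v ×ˢ Set.Icc (0 : ℝ) 1) ?_ ?_
    · rintro ⟨p, q⟩ h
      simp only [Set.mem_inter_iff, Set.mem_prod, Set.mem_Icc] at h ⊢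
      refine ⟨⟨?_, ?_⟩, ?_, ?_⟩ <;> linarith [h.1.1.2, h.1.2.1, h.1.2.2, h.2.1.1]
    · rw [hc v v (by linarith) le_rfl (by linarith)]; simp
  rw [h0, add_zero, ← Set.union_prod, Set.Icc_union_Icc_eq_Icc huv hvw] at h
  rw [h, ENNReal.toReal_add (measure_ne_top _ _) (measure_ne_top _ _)]

theorem row_sum (μ : Measure (ℝ × ℝ)) (hμ : IsPermuton μ) (x x' u v : ℝ)
    (hx : 0 ≤ x) (hxx : x ≤ x') (hx' : x' ≤ 1) (hu : 0 ≤ u) (huv : u ≤ v) (hv : v ≤ 1) :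
    (μ (Set.Icc x x' ×ˢ Set.Icc 0 u)).toReal + (μ (Set.Icc x x' ×ˢ Set.Icc u v)).toReal +
      (μ (Set.Icc x x' ×ˢ Set.Icc v 1)).toReal = x' - x := by
  rw [row_add μ hμ x x' 0 u v hx hx' le_rfl hu huv hv,
    row_add μ hμ x x' 0 v 1 hx hx' le_rfl (hu.trans huv) hv le_rfl,
    hμ.2.1 x x' hx hxx hx', ENNReal.toReal_ofReal (by linarith)]

theorem col_sum (μ : Measure (ℝ × ℝ)) (hμ : IsPermuton μ) (y y' u v : ℝ)
    (hy : 0 ≤ y) (hyy : y ≤ y') (hy' : y' ≤ 1) (hu : 0 ≤ u) (huv : u ≤ v) (hv : v ≤ 1) :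
    (μ (Set.Icc 0 u ×ˢ Set.Icc y y')).toReal + (μ (Set.Icc u v ×ˢ Set.Icc y y')).toReal +
      (μ (Set.Icc v 1 ×ˢ Set.Icc y y')).toReal = y' - y := by
  rw [col_add μ hμ y y' 0 u v hy hy' le_rfl hu huv hv,
    col_add μ hμ y y' 0 v 1 hy hy' le_rfl (hu.trans huv) hv le_rfl,
    hμ.2.2 y y' hy hyy hy', ENNReal.toReal_ofReal (by linarith)]

theorem statement_4 (μ : Measure (ℝ × ℝ)) (hμ : IsPermuton μ)
    (x₁ y₁ x₂ y₂ : ℝ)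
    (h₁ : (x₁, y₁) ∈ Set.Icc (0 : ℝ) 1 ×ˢ Set.Icc (0 : ℝ) 1)
    (h₂ : (x₂, y₂) ∈ Set.Icc (0 : ℝ) 1 ×ˢ Set.Icc (0 : ℝ) 1)
    (hx : x₁ ≤ x₂) (hy : y₁ ≤ y₂)
    (a : Fin 3 → Fin 3 → ℝ)
    (ha : ∀ i j : Fin 3, a i j =
      (μ (Set.Icc (![0, x₁, x₂, 1] i.castSucc) (![0, x₁, x₂, 1] i.succ) ×ˢ
          Set.Icc (![0, y₁, y₂, 1] j.castSucc) (![0, y₁, y₂, 1] j.succ))).toReal)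
    (heq : a 1 1 * a 2 2 - a 1 2 * a 2 1 + a 1 1 * a 0 0 - a 0 1 * a 1 0 +
      a 1 1 * a 2 0 - a 1 0 * a 2 1 + a 1 1 * a 0 2 - a 0 1 * a 1 2 = 0) :
    a 1 1 = (x₂ - x₁) * (y₂ - y₁) := by
  obtain ⟨⟨a1, a2⟩, b1, b2⟩ := h₁
  obtain ⟨⟨c1, c2⟩, d1, d2⟩ := h₂
  dsimp only at a1 a2 b1 b2 c1 c2 d1 d2
  have r0 : a 0 0 + a 0 1 + a 0 2 = x₁ - 0 := by
    rw [ha, ha, ha]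
    exact row_sum μ hμ 0 x₁ y₁ y₂ le_rfl a1 a2 b1 hy d2
  have r1 : a 1 0 + a 1 1 + a 1 2 = x₂ - x₁ := by
    rw [ha, ha, ha]
    exact row_sum μ hμ x₁ x₂ y₁ y₂ a1 hx c2 b1 hy d2
  have r2 : a 2 0 + a 2 1 + a 2 2 = 1 - x₂ := by
    rw [ha, ha, ha]
    exact row_sum μ hμ x₂ 1 y₁ y₂ c1 c2 le_rfl b1 hy d2
  have k1 : a 0 1 + a 1 1 + a 2 1 = y₂ - y₁ := by
    rw [ha, ha, ha]
    exact col_sum μ hμ y₁ y₂ x₁ x₂ b1 hy d2 a1 hx c2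
  have t : a 0 0 + a 0 2 + a 2 0 + a 2 2 =
      1 - (a 1 0 + a 1 1 + a 1 2) - (a 0 1 + a 1 1 + a 2 1) + a 1 1 := by linarith
  rw [← r1, ← k1]
  linear_combination heq - a 1 1 * t
end

section
/- Let μ be a permuton. Suppose that for (μ⊗μ)-almost every pair of points ((x_1,y_1),(x_2,y_2)) ∈ ([0,1]²)² with x_1 < x_2 and y_1 < y_2, the quantities a_{ij} = μ([x_{i−1},x_i]×[y_{j−1},y_j]) for i,j ∈ {1,2,3} (where x_0 = y_0 = 0 and x_3 = y_3 = 1) satisfy a_{22}a_{33} − a_{23}a_{32} + a_{22}a_{11} − a_{12}a_{21} + a_{22}a_{31} − a_{21}a_{32} + a_{22}a_{13} − a_{12}a_{23} = 0. Then μ([x_1,x_2]×[y_1,y_2]) = (x_2−x_1)(y_2−y_1) for all points (x_1,y_1),(x_2,y_2) ∈ supp μ with x_1 ≤ x_2 and y_1 ≤ y_2. -/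
open MeasureTheory Filter

theorem aux_square (μ : Measure (ℝ × ℝ)) (hμ : IsPermuton μ) :
    ∀ᵐ z ∂μ, z ∈ Set.Icc (0 : ℝ) 1 ×ˢ Set.Icc (0 : ℝ) 1 := by
  have := hμ.1
  change Set.Icc (0 : ℝ) 1 ×ˢ Set.Icc (0 : ℝ) 1 ∈ ae μ
  rw [mem_ae_iff_prob_eq_one₀ ((measurableSet_Icc.prod measurableSet_Icc).nullMeasurableSet)]
  have := hμ.2.1 0 1 le_rfl zero_le_one le_rfl
  simpa using this

theorem aux_line1 (μ : Measure (ℝ × ℝ)) (hμ : IsPermuton μ) (x : ℝ) :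
    ∀ᵐ z ∂μ, z.1 ≠ x := by
  by_cases hx : 0 ≤ x ∧ x ≤ 1
  · have h0 := hμ.2.1 x x hx.1 le_rfl hx.2
    rw [sub_self, ENNReal.ofReal_zero] at h0
    have h1 := measure_eq_zero_iff_ae_notMem.1 h0
    filter_upwards [h1, aux_square μ hμ] with z hz hs e
    apply hz
    refine ⟨?_, hs.2⟩
    rw [e]
    simp
  · filter_upwards [aux_square μ hμ] with z hs e
    exact hx (e ▸ hs.1)

theorem aux_line2 (μ : Measure (ℝ × ℝ)) (hμ : IsPermuton μ) (x : ℝ) :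
    ∀ᵐ z ∂μ, z.2 ≠ x := by
  by_cases hx : 0 ≤ x ∧ x ≤ 1
  · have h0 := hμ.2.2 x x hx.1 le_rfl hx.2
    rw [sub_self, ENNReal.ofReal_zero] at h0
    have h1 := measure_eq_zero_iff_ae_notMem.1 h0
    filter_upwards [h1, aux_square μ hμ] with z hz hs e
    apply hz
    refine ⟨hs.1, ?_⟩
    rw [e]
    simp
  · filter_upwards [aux_square μ hμ] with z hs e
    exact hx (e ▸ hs.2)

theorem aux_split1 (μ : Measure (ℝ × ℝ)) (hμ : IsPermuton μ) (J : Set ℝ) (hJ : MeasurableSet J)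
    (a b c : ℝ) (hab : a ≤ b) (hbc : b ≤ c) :
    μ.real (Set.Icc a c ×ˢ J) = μ.real (Set.Icc a b ×ˢ J) + μ.real (Set.Icc b c ×ˢ J) := by
  have := hμ.1
  rw [← Set.Icc_union_Icc_eq_Icc hab hbc, Set.union_prod]
  apply measureReal_union₀ (measurableSet_Icc.prod hJ).nullMeasurableSet
  rw [AEDisjoint, measure_eq_zero_iff_ae_notMem]
  filter_upwards [aux_line1 μ hμ b] with z hz hm
  exact hz (le_antisymm hm.1.1.2 hm.2.1.1)

theorem aux_split2 (μ : Measure (ℝ × ℝ)) (hμ : IsPermuton μ) (J : Set ℝ) (hJ : MeasurableSet J)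
    (a b c : ℝ) (hab : a ≤ b) (hbc : b ≤ c) :
    μ.real (J ×ˢ Set.Icc a c) = μ.real (J ×ˢ Set.Icc a b) + μ.real (J ×ˢ Set.Icc b c) := by
  have := hμ.1
  rw [← Set.Icc_union_Icc_eq_Icc hab hbc, Set.prod_union]
  apply measureReal_union₀ (hJ.prod measurableSet_Icc).nullMeasurableSet
  rw [AEDisjoint, measure_eq_zero_iff_ae_notMem]
  filter_upwards [aux_line2 μ hμ b] with z hz hm
  exact hz (le_antisymm hm.1.2.2 hm.2.2.1)

theorem aux_ident (μ : Measure (ℝ × ℝ)) (hμ : IsPermuton μ) (x1 y1 x2 y2 : ℝ)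
    (hx0 : 0 ≤ x1) (hx : x1 ≤ x2) (hx1 : x2 ≤ 1) (hy0 : 0 ≤ y1) (hy : y1 ≤ y2) (hy1 : y2 ≤ 1)
    (h : ∀ a : Fin 3 → Fin 3 → ℝ,
        (∀ i j : Fin 3, a i j =
          (μ (Set.Icc (![0, x1, x2, 1] i.castSucc) (![0, x1, x2, 1] i.succ) ×ˢ
              Set.Icc (![0, y1, y2, 1] j.castSucc) (![0, y1, y2, 1] j.succ))).toReal) →
        a 1 1 * a 2 2 - a 1 2 * a 2 1 + a 1 1 * a 0 0 - a 0 1 * a 1 0 +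
          a 1 1 * a 2 0 - a 1 0 * a 2 1 + a 1 1 * a 0 2 - a 0 1 * a 1 2 = 0) :
    μ (Set.Icc x1 x2 ×ˢ Set.Icc y1 y2) = ENNReal.ofReal ((x2 - x1) * (y2 - y1)) := by
  have := hμ.1
  have key := h _ (fun i j => rfl)
  change μ.real (Set.Icc x1 x2 ×ˢ Set.Icc y1 y2) * μ.real (Set.Icc x2 1 ×ˢ Set.Icc y2 1)
    - μ.real (Set.Icc x1 x2 ×ˢ Set.Icc y2 1) * μ.real (Set.Icc x2 1 ×ˢ Set.Icc y1 y2)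
    + μ.real (Set.Icc x1 x2 ×ˢ Set.Icc y1 y2) * μ.real (Set.Icc 0 x1 ×ˢ Set.Icc 0 y1)
    - μ.real (Set.Icc 0 x1 ×ˢ Set.Icc y1 y2) * μ.real (Set.Icc x1 x2 ×ˢ Set.Icc 0 y1)
    + μ.real (Set.Icc x1 x2 ×ˢ Set.Icc y1 y2) * μ.real (Set.Icc x2 1 ×ˢ Set.Icc 0 y1)
    - μ.real (Set.Icc x1 x2 ×ˢ Set.Icc 0 y1) * μ.real (Set.Icc x2 1 ×ˢ Set.Icc y1 y2)
    + μ.real (Set.Icc x1 x2 ×ˢ Set.Icc y1 y2) * μ.real (Set.Icc 0 x1 ×ˢ Set.Icc y2 1)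
    - μ.real (Set.Icc 0 x1 ×ˢ Set.Icc y1 y2) * μ.real (Set.Icc x1 x2 ×ˢ Set.Icc y2 1) = 0 at key
  have row : ∀ u v : ℝ, 0 ≤ u → u ≤ v → v ≤ 1 →
      μ.real (Set.Icc u v ×ˢ Set.Icc 0 y1) + (μ.real (Set.Icc u v ×ˢ Set.Icc y1 y2)
        + μ.real (Set.Icc u v ×ˢ Set.Icc y2 1)) = v - u := by
    intro u v h1 h2 h3
    rw [← aux_split2 μ hμ _ measurableSet_Icc y1 y2 1 hy hy1,
      ← aux_split2 μ hμ _ measurableSet_Icc 0 y1 1 hy0 (hy.trans hy1), Measure.real,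
      hμ.2.1 u v h1 h2 h3, ENNReal.toReal_ofReal (by linarith)]
  have col : μ.real (Set.Icc 0 x1 ×ˢ Set.Icc y1 y2) + (μ.real (Set.Icc x1 x2 ×ˢ Set.Icc y1 y2)
        + μ.real (Set.Icc x2 1 ×ˢ Set.Icc y1 y2)) = y2 - y1 := by
    rw [← aux_split1 μ hμ _ measurableSet_Icc x1 x2 1 hx hx1,
      ← aux_split1 μ hμ _ measurableSet_Icc 0 x1 1 hx0 (hx.trans hx1), Measure.real,
      hμ.2.2 y1 y2 hy0 hy hy1, ENNReal.toReal_ofReal (by linarith)]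
  have r1 := row 0 x1 le_rfl hx0 (hx.trans hx1)
  have r2 := row x1 x2 hx0 hx hx1
  have r3 := row x2 1 (hx0.trans hx) hx1 le_rfl
  have fin : μ.real (Set.Icc x1 x2 ×ˢ Set.Icc y1 y2) = (x2 - x1) * (y2 - y1) := by
    generalize μ.real (Set.Icc x1 x2 ×ˢ Set.Icc y1 y2) = a11 at *
    generalize μ.real (Set.Icc x1 x2 ×ˢ Set.Icc y2 1) = a12 at *
    generalize μ.real (Set.Icc x1 x2 ×ˢ Set.Icc 0 y1) = a10 at *
    generalize μ.real (Set.Icc x2 1 ×ˢ Set.Icc y1 y2) = a21 at *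
    generalize μ.real (Set.Icc x2 1 ×ˢ Set.Icc y2 1) = a22 at *
    generalize μ.real (Set.Icc x2 1 ×ˢ Set.Icc 0 y1) = a20 at *
    generalize μ.real (Set.Icc 0 x1 ×ˢ Set.Icc y1 y2) = a01 at *
    generalize μ.real (Set.Icc 0 x1 ×ˢ Set.Icc y2 1) = a02 at *
    generalize μ.real (Set.Icc 0 x1 ×ˢ Set.Icc 0 y1) = a00 at *
    have tot : a00 + a01 + a02 + a10 + a11 + a12 + a20 + a21 + a22 = 1 := by linarith
    rw [← r2, ← col]
    linear_combination key - a11 * tot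
  rw [← fin, ofReal_measureReal]

theorem aux_cont (μ : Measure (ℝ × ℝ)) (hμ : IsPermuton μ) :
    Continuous (fun pq : (ℝ × ℝ) × (ℝ × ℝ) =>
      μ (Set.Icc pq.1.1 pq.2.1 ×ˢ Set.Icc pq.1.2 pq.2.2)) := by
  have := hμ.1
  rw [continuous_iff_continuousAt]
  rintro ⟨⟨a, b⟩, ⟨c, d⟩⟩
  refine tendsto_measure_of_ae_tendsto_indicator_of_isFiniteMeasure (nhds ((a, b), (c, d)))
    (measurableSet_Icc.prod measurableSet_Icc)
    (fun pq => measurableSet_Icc.prod measurableSet_Icc) ?_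
  filter_upwards [aux_line1 μ hμ a, aux_line1 μ hμ c, aux_line2 μ hμ b, aux_line2 μ hμ d]
    with z h1 h2 h3 h4
  have gen : ∀ (f : (ℝ × ℝ) × (ℝ × ℝ) → ℝ), Continuous f → ∀ t, t ≠ f ((a, b), (c, d)) →
      ∀ᶠ pq in nhds ((a, b), (c, d)), ((f pq ≤ t ↔ f ((a, b), (c, d)) ≤ t) ∧
        (t ≤ f pq ↔ t ≤ f ((a, b), (c, d)))) := by
    intro f hf t ht
    rcases lt_or_gt_of_ne ht with h | h
    · filter_upwards [hf.continuousAt.eventually (lt_mem_nhds h)] with pq hpq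
      exact ⟨⟨fun h' => absurd hpq (not_lt.2 h'), fun h' => absurd h (not_lt.2 h')⟩,
        ⟨fun _ => h.le, fun _ => hpq.le⟩⟩
    · filter_upwards [hf.continuousAt.eventually (gt_mem_nhds h)] with pq hpq
      exact ⟨⟨fun _ => h.le, fun _ => hpq.le⟩,
        ⟨fun h' => absurd hpq (not_lt.2 h'), fun h' => absurd h (not_lt.2 h')⟩⟩
  filter_upwards [gen (fun pq => pq.1.1) (by fun_prop) z.1 h1,
    gen (fun pq => pq.2.1) (by fun_prop) z.1 h2, gen (fun pq => pq.1.2) (by fun_prop) z.2 h3,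
    gen (fun pq => pq.2.2) (by fun_prop) z.2 h4] with pq e1 e2 e3 e4
  simp only [Set.mem_prod, Set.mem_Icc]
  rw [e1.1, e2.2, e3.1, e4.2]

theorem statement_5 (μ : Measure (ℝ × ℝ)) (hμ : IsPermuton μ)
    (h : ∀ᵐ pq ∂(μ.prod μ), pq.1.1 < pq.2.1 → pq.1.2 < pq.2.2 →
      ∀ a : Fin 3 → Fin 3 → ℝ,
        (∀ i j : Fin 3, a i j =
          (μ (Set.Icc (![0, pq.1.1, pq.2.1, 1] i.castSucc) (![0, pq.1.1, pq.2.1, 1] i.succ) ×ˢ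
              Set.Icc (![0, pq.1.2, pq.2.2, 1] j.castSucc)
                (![0, pq.1.2, pq.2.2, 1] j.succ))).toReal) →
        a 1 1 * a 2 2 - a 1 2 * a 2 1 + a 1 1 * a 0 0 - a 0 1 * a 1 0 +
          a 1 1 * a 2 0 - a 1 0 * a 2 1 + a 1 1 * a 0 2 - a 0 1 * a 1 2 = 0) :
    ∀ p ∈ measSupport μ, ∀ q ∈ measSupport μ, p.1 ≤ q.1 → p.2 ≤ q.2 →
      μ (Set.Icc p.1 q.1 ×ˢ Set.Icc p.2 q.2) =
        ENNReal.ofReal ((q.1 - p.1) * (q.2 - p.2)) := by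
  have := hμ.1
  intro p hp q hq h1 h2
  rcases h1.eq_or_lt with e1 | h1
  · rw [e1, sub_self, zero_mul, ENNReal.ofReal_zero, measure_eq_zero_iff_ae_notMem]
    filter_upwards [aux_line1 μ hμ q.1] with z hz hm
    exact hz (le_antisymm hm.1.2 hm.1.1)
  rcases h2.eq_or_lt with e2 | h2
  · rw [e2, sub_self, mul_zero, ENNReal.ofReal_zero, measure_eq_zero_iff_ae_notMem]
    filter_upwards [aux_line2 μ hμ q.2] with z hz hm
    exact hz (le_antisymm hm.2.2 hm.2.1)
  by_contra hne
  let W : Set ((ℝ × ℝ) × (ℝ × ℝ)) := {pq | pq.1.1 < pq.2.1 ∧ pq.1.2 < pq.2.2 ∧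
    μ (Set.Icc pq.1.1 pq.2.1 ×ˢ Set.Icc pq.1.2 pq.2.2) ≠
      ENNReal.ofReal ((pq.2.1 - pq.1.1) * (pq.2.2 - pq.1.2))}
  have hW : IsOpen W := by
    have o1 : IsOpen {pq : (ℝ × ℝ) × (ℝ × ℝ) | pq.1.1 < pq.2.1} :=
      isOpen_lt (by fun_prop) (by fun_prop)
    have o2 : IsOpen {pq : (ℝ × ℝ) × (ℝ × ℝ) | pq.1.2 < pq.2.2} :=
      isOpen_lt (by fun_prop) (by fun_prop)
    refine o1.inter (o2.inter (isOpen_ne_fun (aux_cont μ hμ) ?_))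
    exact ENNReal.continuous_ofReal.comp (by fun_prop)
  have hW0 : (μ.prod μ) W = 0 := by
    rw [measure_eq_zero_iff_ae_notMem]
    have s1 : ∀ᵐ pq ∂(μ.prod μ), pq.1 ∈ Set.Icc (0 : ℝ) 1 ×ˢ Set.Icc (0 : ℝ) 1 :=
      Measure.quasiMeasurePreserving_fst.ae (aux_square μ hμ)
    have s2 : ∀ᵐ pq ∂(μ.prod μ), pq.2 ∈ Set.Icc (0 : ℝ) 1 ×ˢ Set.Icc (0 : ℝ) 1 :=
      Measure.quasiMeasurePreserving_snd.ae (aux_square μ hμ)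
    filter_upwards [h, s1, s2] with pq hpq m1 m2 hm
    exact hm.2.2 (aux_ident μ hμ _ _ _ _ m1.1.1 hm.1.le m2.1.2 m1.2.1 hm.2.1.le m2.2.2
      (hpq hm.1 hm.2.1))
  obtain ⟨U, V, hU, hV, hpU, hqV, hUV⟩ := isOpen_prod_iff.1 hW p q ⟨h1, h2, hne⟩
  have := measure_mono_null hUV hW0
  rw [Measure.prod_prod] at this
  exact (mul_ne_zero (hp U hU hpU).ne' (hq V hV hqV).ne') this
end
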